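/- arXiv:2205.04965 — 11 statements merged into one kernel-verified Lean document; each statement's English description precedes it below -/
import Mathlib

section
/- For pure unit quaternions p, q, the set F := { x ∈ ℍ : p * x = x * q } is a 2-dimensional ℝ-linear subspace of ℍ, and K_p^q = { x ∈ F : ‖x‖ = 1 }; in particular K_p^q is nonempty (it is a great circle of S³). Conversely, for every 2-dimensional ℝ-linear subspace W of ℍ there exist pure unit quaternions p, q such that { x ∈ W : ‖x‖ = 1 } = K_p^q. -/
open Quaternion

/-- The great circle `K_p^q`: the set of unit quaternions `x` with
`(conj x) * p * x = q`. -/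
def K (p q : Quaternion ℝ) : Set (Quaternion ℝ) :=
  {x : Quaternion ℝ | ‖x‖ = 1 ∧ star x * p * x = q}

/-!
Since `star x = x⁻¹` on the unit sphere, `K p q` is the unit sphere of the space `F p q` of
solutions of `p * x = x * q`. The involution `x ↦ p * x * q` has `F p q` and `F p (-q)` as its
eigenspaces (for `-1` and `1`), so `ℍ = F p q ⊕ F p (-q)`. Right multiplication by a nonzero
element anticommuting with `q`, such as a commutator `⁅y, q⁆`, exchanges the two summands, hence
each has dimension `4 / 2 = 2`. Conversely, an orthonormal basis `u, v` of a plane lies in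
`F (v * star u) (star u * v)`, and orthogonality makes these two unit quaternions pure.
-/

section Intertwiner

variable (R : Type*) {A : Type*} [CommSemiring R] [Semiring A] [Algebra R A]

/-- The `R`-submodule of all `x : A` with `p * x = x * q`, i.e. of the elements intertwining right
multiplication by `q` with left multiplication by `p`. -/
def intertwiner (p q : A) : Submodule R A :=
  LinearMap.eqLocus (LinearMap.mulLeft R p) (LinearMap.mulRight R q)

variable {R}

lemma mem_intertwiner {p q x : A} : x ∈ intertwiner R p q ↔ p * x = x * q :=
  Iff.rfl

lemma mul_mem_intertwiner_iff {p q q' x : A} {r : Aˣ} (hr : SemiconjBy (r : A) q' q) :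
    x * r ∈ intertwiner R p q' ↔ x ∈ intertwiner R p q := by
  rw [mem_intertwiner, mem_intertwiner, mul_assoc x, hr.eq, ← mul_assoc, ← mul_assoc,
    r.isUnit.mul_left_inj]

lemma finrank_intertwiner_eq_of_semiconjBy (p : A) {q q' : A} {r : Aˣ}
    (hr : SemiconjBy (r : A) q' q) :
    Module.finrank R (intertwiner R p q) = Module.finrank R (intertwiner R p q') := by
  have hcomap : (intertwiner R p q').comap (r.mulRightLinearEquiv R).toLinearMap =
      intertwiner R p q :=
    Submodule.ext fun _ ↦ mul_mem_intertwiner_iff hr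
  rw [← hcomap]
  exact ((r.mulRightLinearEquiv R).ofSubmodule' (intertwiner R p q')).finrank_eq

lemma star_mul_mul_eq_iff_mem_intertwiner [StarMul A] {x : A} (hx : x ∈ unitary A) (p q : A) :
    star x * p * x = q ↔ x ∈ intertwiner R p q := by
  rw [mem_intertwiner]
  constructor
  · rintro rfl
    rw [← mul_assoc, ← mul_assoc, Unitary.mul_star_self_of_mem hx, one_mul]
  · intro h
    rw [mul_assoc, h, ← mul_assoc, Unitary.star_mul_self_of_mem hx, one_mul]

lemma span_pair_le_intertwiner [StarMul A] {u : A} (hu : u ∈ unitary A) (v : A) :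
    Submodule.span R {u, v} ≤ intertwiner R (v * star u) (star u * v) := by
  rw [Submodule.span_le, Set.pair_subset_iff]
  constructor <;> rw [SetLike.mem_coe, mem_intertwiner]
  · rw [mul_assoc, Unitary.star_mul_self_of_mem hu, ← mul_assoc, Unitary.mul_star_self_of_mem hu,
      one_mul, mul_one]
  · simp only [mul_assoc]

end Intertwiner

lemma isCompl_intertwiner_neg {R A : Type*} [CommRing R] [Invertible (2 : R)] [Ring A] [Algebra R A]
    {p q : A} (hp : p * p = -1) (hq : q * q = -1) :
    IsCompl (intertwiner R p q) (intertwiner R p (-q)) := by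
  have hpp (x : A) : p * (p * x) = -x := by rw [← mul_assoc, hp, neg_one_mul]
  have hqq (x : A) : x * q * q = -x := by rw [mul_assoc, hq, mul_neg_one]
  have half (x : A) : (⅟2 : R) • (x + x) = x := by
    rw [← two_smul R, smul_smul, invOf_mul_self, one_smul]
  constructor
  · rw [Submodule.disjoint_def]
    intro x hx hx'
    rw [mem_intertwiner] at hx hx'
    have hpx : p * x = 0 :=
      calc p * x = (⅟2 : R) • (p * x + p * x) := (half _).symm
        _ = (⅟2 : R) • (x * q + x * -q) := congrArg _ (congrArg₂ _ hx hx')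
        _ = 0 := by rw [mul_neg, add_neg_cancel, smul_zero]
    rw [← neg_eq_zero, ← hpp, hpx, mul_zero]
  · rw [codisjoint_iff, Submodule.eq_top_iff']
    intro x
    have hminus : x - p * x * q ∈ intertwiner R p q := by
      rw [mem_intertwiner, mul_sub, sub_mul, mul_assoc p x q, hpp, ← mul_assoc, hqq]
      abel
    have hplus : x + p * x * q ∈ intertwiner R p (-q) := by
      rw [mem_intertwiner, mul_add, mul_neg, add_mul, mul_assoc p x q, hpp, ← mul_assoc, hqq]
      abel
    refine Submodule.mem_sup.2 ⟨_, Submodule.smul_mem _ (⅟2) hminus,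
      _, Submodule.smul_mem _ (⅟2) hplus, ?_⟩
    rw [← smul_add, sub_add_add_cancel, half]

lemma semiconjBy_lie_neg_self {A : Type*} [Ring A] {y q : A} (h : Commute (q * q) y) :
    SemiconjBy ⁅y, q⁆ (-q) q := by
  rw [SemiconjBy, Ring.lie_def, sub_mul, mul_sub, mul_neg, mul_neg, ← mul_assoc q q, h.eq]
  noncomm_ring

lemma two_mul_finrank_intertwiner {k D : Type*} [Field k] [NeZero (2 : k)] [DivisionRing D]
    [Algebra k D] [FiniteDimensional k D] {p q : D} (hp : p * p = -1) (hq : q * q = -1)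
    (hq_center : q ∉ Subring.center D) :
    2 * Module.finrank k (intertwiner k p q) = Module.finrank k D := by
  let _ : Invertible (2 : k) := invertibleOfNonzero two_ne_zero
  obtain ⟨y, hy⟩ : ∃ y, y * q ≠ q * y := by
    simpa only [Subring.mem_center_iff, not_forall] using hq_center
  have hlie : ⁅y, q⁆ ≠ 0 := by rwa [Ring.lie_def, sub_ne_zero]
  have hanti : SemiconjBy ⁅y, q⁆ (-q) q :=
    semiconjBy_lie_neg_self (by rw [hq]; exact (Commute.one_left y).neg_left)
  calc 2 * Module.finrank k (intertwiner k p q)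
      = Module.finrank k (intertwiner k p q) + Module.finrank k (intertwiner k p (-q)) := by
        rw [two_mul, ← finrank_intertwiner_eq_of_semiconjBy p (r := Units.mk0 _ hlie) hanti]
    _ = Module.finrank k D :=
        Submodule.finrank_add_eq_of_isCompl (isCompl_intertwiner_neg hp hq)

lemma exists_orthonormal_span_pair_eq {𝕜 E : Type*} [RCLike 𝕜] [NormedAddCommGroup E]
    [InnerProductSpace 𝕜 E] {W : Submodule 𝕜 E} (hW : Module.finrank 𝕜 W = 2) :
    ∃ u v : E, ‖u‖ = 1 ∧ ‖v‖ = 1 ∧ inner 𝕜 u v = 0 ∧ Submodule.span 𝕜 {u, v} = W := by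
  have : FiniteDimensional 𝕜 W := Module.finite_of_finrank_eq_succ hW
  let b := (stdOrthonormalBasis 𝕜 W).reindex (finCongr hW)
  refine ⟨b 0, b 1, b.orthonormal.1 0, b.orthonormal.1 1, b.orthonormal.2 zero_ne_one, ?_⟩
  have hspan : Submodule.span 𝕜 {b 0, b 1} = ⊤ := by
    rw [← b.toBasis.span_eq, b.coe_toBasis]
    congr 1
    ext w
    simp [Fin.exists_fin_two, eq_comm]
  rw [← Set.image_pair, ← W.coe_subtype, ← Submodule.map_span, hspan, Submodule.map_subtype_top]

section Quaternion

lemma quaternion_re_mul_comm {R : Type*} [CommRing R] (a b : ℍ[R]) : (a * b).re = (b * a).re := by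
  simp only [re_mul]
  ring

lemma quaternion_im_eq_zero_of_mem_center {R : Type*} [CommRing R] [IsAddTorsionFree R] {q : ℍ[R]}
    (hq : q ∈ Subring.center ℍ[R]) : q.im = 0 := by
  rw [Subring.mem_center_iff] at hq
  let i : ℍ[R] := (equivProd R).symm (0, 1, 0, 0)
  let j : ℍ[R] := (equivProd R).symm (0, 0, 1, 0)
  have hI : -q.imI = q.imI := by simpa [i, j] using congrArg (·.imK) (hq j)
  have hJ : q.imJ = -q.imJ := by simpa [i, j] using congrArg (·.imK) (hq i)
  have hK : -q.imK = q.imK := by simpa [i, j] using congrArg (·.imJ) (hq i)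
  rw [neg_eq_self] at hI hK
  rw [self_eq_neg] at hJ
  ext <;> simp [hI, hJ, hK]

section OrderedField

variable {k : Type*} [Field k] [LinearOrder k] [IsStrictOrderedRing k]

lemma notMem_center_of_mul_self_eq_neg_one {q : ℍ[k]} (hq : q * q = -1) :
    q ∉ Subring.center ℍ[k] := by
  intro hcenter
  have hreal : q = q.re := by
    rw [← sub_eq_zero, sub_re_self, quaternion_im_eq_zero_of_mem_center hcenter]
  have hre : q.re * q.re = -1 := by
    rw [← coe_inj, coe_mul, ← hreal, hq, coe_neg, coe_one]
  exact absurd (mul_self_nonneg q.re) (by simp [hre])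

lemma finrank_intertwiner_eq_two {p q : ℍ[k]} (hp : p * p = -1) (hq : q * q = -1) :
    Module.finrank k (intertwiner k p q) = 2 := by
  have hrank := two_mul_finrank_intertwiner (k := k) hp hq (notMem_center_of_mul_self_eq_neg_one hq)
  rw [finrank_eq_four] at hrank
  lia

end OrderedField

lemma mem_unitary_of_norm_eq_one {x : ℍ[ℝ]} (hx : ‖x‖ = 1) : x ∈ unitary ℍ[ℝ] := by
  simp [Unitary.mem_iff, Quaternion.star_mul_self, Quaternion.self_mul_star,
    normSq_eq_norm_mul_self, hx]

lemma mul_self_eq_neg_one_of_re_eq_zero {q : ℍ[ℝ]} (hre : q.re = 0) (hq : ‖q‖ = 1) :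
    q * q = -1 := by
  rw [← sq, sq_eq_neg_normSq.2 hre, normSq_eq_norm_mul_self, hq, mul_one, coe_one]

lemma K_eq_unit_sphere_intertwiner (p q : ℍ[ℝ]) :
    K p q = {x | x ∈ intertwiner ℝ p q ∧ ‖x‖ = 1} := by
  ext x
  rw [K, Set.mem_ofPred_eq, Set.mem_ofPred_eq, and_comm, and_congr_left_iff]
  exact fun hx ↦ star_mul_mul_eq_iff_mem_intertwiner (mem_unitary_of_norm_eq_one hx) p q

lemma K_nonempty {p q : ℍ[ℝ]} (hp : p * p = -1) (hq : q * q = -1) : (K p q).Nonempty := by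
  have : Nontrivial (intertwiner ℝ p q) :=
    Module.nontrivial_of_finrank_eq_succ (finrank_intertwiner_eq_two hp hq)
  obtain ⟨x, hx⟩ := exists_norm_eq (intertwiner ℝ p q) zero_le_one
  rw [K_eq_unit_sphere_intertwiner]
  exact ⟨x, x.2, hx⟩

end Quaternion

theorem statement1 :
    (∀ p q : Quaternion ℝ, p.re = 0 → ‖p‖ = 1 → q.re = 0 → ‖q‖ = 1 →
      ∃ F : Submodule ℝ (Quaternion ℝ),
        (F : Set (Quaternion ℝ)) = {x : Quaternion ℝ | p * x = x * q} ∧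
        Module.finrank ℝ F = 2 ∧
        K p q = {x : Quaternion ℝ | x ∈ F ∧ ‖x‖ = 1} ∧
        (K p q).Nonempty) ∧
    (∀ W : Submodule ℝ (Quaternion ℝ), Module.finrank ℝ W = 2 →
      ∃ p q : Quaternion ℝ, p.re = 0 ∧ ‖p‖ = 1 ∧ q.re = 0 ∧ ‖q‖ = 1 ∧
        {x : Quaternion ℝ | x ∈ W ∧ ‖x‖ = 1} = K p q) := by
  constructor
  · intro p q hp0 hp hq0 hq
    have hp_sq := mul_self_eq_neg_one_of_re_eq_zero hp0 hp
    have hq_sq := mul_self_eq_neg_one_of_re_eq_zero hq0 hq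
    exact ⟨intertwiner ℝ p q, rfl, finrank_intertwiner_eq_two hp_sq hq_sq,
      K_eq_unit_sphere_intertwiner p q, K_nonempty hp_sq hq_sq⟩
  · intro W hW
    obtain ⟨u, v, hu, hv, huv, rfl⟩ := exists_orthonormal_span_pair_eq hW
    have hp0 : (v * star u).re = 0 := by rw [← inner_def, real_inner_comm, huv]
    have hq0 : (star u * v).re = 0 := by rw [quaternion_re_mul_comm, hp0]
    have hp : ‖v * star u‖ = 1 := by rw [norm_mul, Quaternion.norm_star, hu, hv, one_mul]
    have hq : ‖star u * v‖ = 1 := by rw [norm_mul, Quaternion.norm_star, hu, hv, one_mul]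
    have hfinrank := finrank_intertwiner_eq_two (mul_self_eq_neg_one_of_re_eq_zero hp0 hp)
      (mul_self_eq_neg_one_of_re_eq_zero hq0 hq)
    have hspan : Submodule.span ℝ {u, v} = intertwiner ℝ (v * star u) (star u * v) :=
      Submodule.eq_of_le_of_finrank_eq (span_pair_le_intertwiner (mem_unitary_of_norm_eq_one hu) v)
        (hW.trans hfinrank.symm)
    exact ⟨v * star u, star u * v, hp0, hp, hq0, hq, by rw [K_eq_unit_sphere_intertwiner, hspan]⟩
end

section
/- For pure unit quaternions p, q, p′, q′, one has K_p^q = K_{p′}^{q′} (as subsets of ℍ) if and only if (p′, q′) = (p, q) or (p′, q′) = (−p, −q). Thus the parameterization of great circles by pairs (p, q) is unique up to simultaneously negating both parameters. -/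
open Quaternion

/-!
For a unit quaternion `x`, the equation `conj x * p * x = q` is the real-linear equation
`p * x = x * q`, so `K p q` is the unit sphere of a real subspace, and this subspace is stable under
left multiplication by `p`. If it is contained in the subspace attached to `(p', q')`, then
comparing `p' * (p * x)` with `p * (p' * x)` for one `x ≠ 0` shows that `p'` commutes with `p`. If
moreover `p` and `p'` have the same real part and norm, then `(p' - p) * (p' - conj p)` expands to
the characteristic polynomial of `p'` evaluated at `p'`, hence vanishes, so `p'` is `p` or `conj p`;
for pure quaternions `conj p = -p`.

Nonzero solutions `x` exist when `p` and `q` have the same real part and norm: every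
`p * a - a * conj q` is a solution, and if these all vanish then `p = conj q` is central, hence
real, so that `p = q` and `x = 1` will do.
-/

section Algebra

variable {R : Type*} [CommRing R]

lemma mul_sub_mul_star_eq_sub_mul_star_mul {p q : ℍ[R]} (hre : p.re = q.re)
    (hnorm : normSq p = normSq q) (a : ℍ[R]) :
    p * (p * a - a * star q) = (p * a - a * star q) * q := by
  have trace_mul : (p + star p) * a = a * (q + star q) := by
    rw [self_add_star', self_add_star', hre, coe_commutes]
  have norm_mul : p * star p * a = a * (star q * q) := by
    rw [self_mul_star, star_mul_self, hnorm, coe_commutes]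
  have sub_eq_sub : p * a - a * star q = a * q - star p * a := by
    rw [add_mul, mul_add] at trace_mul
    rwa [sub_eq_sub_iff_add_eq_add]
  calc p * (p * a - a * star q) = p * a * q - p * star p * a := by
        rw [sub_eq_sub, mul_sub, mul_assoc, mul_assoc]
    _ = (p * a - a * star q) * q := by rw [norm_mul, sub_mul, mul_assoc a]

lemma coe_re_eq_self_of_forall_commute [NoZeroDivisors R] [CharZero R] {p : ℍ[R]}
    (h : ∀ a, Commute p a) : (p.re : ℍ[R]) = p := by
  have imJ_comm (a : ℍ[R]) : (p * a).imJ = (a * p).imJ := by rw [(h a).eq]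
  have imK_comm (a : ℍ[R]) : (p * a).imK = (a * p).imK := by rw [(h a).eq]
  simp only [imJ_mul, imK_mul] at imJ_comm imK_comm
  have imI_eq_zero : p.imI = 0 := by simpa [self_eq_neg] using imK_comm ⟨0, 0, 1, 0⟩
  have imJ_eq_zero : p.imJ = 0 := by simpa [neg_eq_self] using imK_comm ⟨0, 1, 0, 0⟩
  have imK_eq_zero : p.imK = 0 := by simpa [self_eq_neg] using imJ_comm ⟨0, 1, 0, 0⟩
  ext
  · rfl
  · exact imI_eq_zero.symm
  · exact imJ_eq_zero.symm
  · exact imK_eq_zero.symm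

lemma exists_ne_zero_mul_eq_mul [NoZeroDivisors R] [CharZero R] {p q : ℍ[R]}
    (hre : p.re = q.re) (hnorm : normSq p = normSq q) : ∃ x ≠ 0, p * x = x * q := by
  by_contra! hzero
  have mul_eq_mul_star (a : ℍ[R]) : p * a = a * star q := by
    by_contra hne
    exact hzero _ (sub_ne_zero.mpr hne) (mul_sub_mul_star_eq_sub_mul_star_mul hre hnorm a)
  have p_eq_star : p = star q := by simpa using mul_eq_mul_star 1
  have p_real : (p.re : ℍ[R]) = p :=
    coe_re_eq_self_of_forall_commute fun a ↦ by
      simpa only [Commute, SemiconjBy, ← p_eq_star] using mul_eq_mul_star a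
  have p_eq_q : p = q := by
    rw [← star_star q, ← p_eq_star, ← p_real, star_coe]
  exact hzero 1 one_ne_zero (by rw [p_eq_q, mul_one, one_mul])

end Algebra

lemma eq_or_eq_star_of_commute {R : Type*} [CommRing R] [LinearOrder R] [IsStrictOrderedRing R]
    {a b : ℍ[R]} (hcomm : Commute a b) (hre : a.re = b.re) (hnorm : normSq a = normSq b) :
    a = b ∨ a = star b := by
  have factor : (a - b) * (a - star b) = 0 := by
    calc (a - b) * (a - star b) = a * a - a * (b + star b) + b * star b := by
          rw [sub_mul, mul_sub, mul_sub, mul_add, hcomm.eq]; abel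
      _ = a * a - a * (a + star a) + a * star a := by
          rw [self_add_star, self_add_star, self_mul_star, self_mul_star, hre, hnorm]
      _ = 0 := by rw [mul_add]; abel
  exact (mul_eq_zero.mp factor).imp sub_eq_zero.mp sub_eq_zero.mp

lemma mem_K_iff {p q x : ℍ[ℝ]} : x ∈ K p q ↔ ‖x‖ = 1 ∧ p * x = x * q := by
  refine and_congr_right fun hx ↦ ?_
  have x_mem : x ∈ unitary ℍ[ℝ] := by
    simp [Unitary.mem_iff, star_mul_self, self_mul_star, normSq_eq_norm_mul_self, hx]
  rw [mul_assoc]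
  constructor
  · rintro rfl
    rw [← mul_assoc, Unitary.mul_star_self_of_mem x_mem, one_mul]
  · intro h
    rw [h, ← mul_assoc, Unitary.star_mul_self_of_mem x_mem, one_mul]

lemma K_star (p q : ℍ[ℝ]) : K (star p) (star q) = K p q := by
  ext x
  simp only [K, Set.mem_ofPred_eq, ← star_inj (y := q), star_mul, star_star, mul_assoc]

lemma norm_inv_smul_mem_K {p q x : ℍ[ℝ]} (hx : x ≠ 0) (h : p * x = x * q) :
    ‖x‖⁻¹ • x ∈ K p q := by
  rw [mem_K_iff, mul_smul_comm, smul_mul_assoc, h]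
  exact ⟨norm_smul_inv_norm (𝕜 := ℝ) hx, rfl⟩

lemma K_nonempty_s2 {p q : ℍ[ℝ]} (hre : p.re = q.re) (hnorm : ‖p‖ = ‖q‖) : (K p q).Nonempty := by
  obtain ⟨x, hx, hpq⟩ := exists_ne_zero_mul_eq_mul hre
    (by rw [normSq_eq_norm_mul_self, normSq_eq_norm_mul_self, hnorm])
  exact ⟨_, norm_inv_smul_mem_K hx hpq⟩

lemma mul_eq_mul_of_K_subset {p q p' q' x : ℍ[ℝ]} (hK : K p q ⊆ K p' q') (h : p * x = x * q) :
    p' * x = x * q' := by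
  rcases eq_or_ne x 0 with rfl | hx
  · rw [mul_zero, zero_mul]
  · have smul_eq := (mem_K_iff.mp (hK (norm_inv_smul_mem_K hx h))).2
    rw [mul_smul_comm, smul_mul_assoc] at smul_eq
    exact smul_right_injective _ (inv_ne_zero (norm_ne_zero_iff.mpr hx)) smul_eq

lemma commute_of_K_subset {p q p' q' : ℍ[ℝ]} (hne : (K p q).Nonempty) (hK : K p q ⊆ K p' q') :
    Commute p' p := by
  obtain ⟨x, hx⟩ := hne
  obtain ⟨hxn, hpq⟩ := mem_K_iff.mp hx
  have hpq' : p' * x = x * q' := mul_eq_mul_of_K_subset hK hpq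
  have p_mul_x : p * (p * x) = p * x * q := by rw [mul_assoc, ← hpq]
  have x_ne_zero : x ≠ 0 := norm_ne_zero_iff.mp (hxn ▸ one_ne_zero)
  refine mul_right_cancel₀ x_ne_zero ?_
  calc p' * p * x = p * x * q' := by rw [mul_assoc, mul_eq_mul_of_K_subset hK p_mul_x]
    _ = p * p' * x := by rw [mul_assoc, ← hpq', mul_assoc]

theorem statement2_general {p q p' : ℍ[ℝ]} (q' : ℍ[ℝ])
    (hre : p.re = q.re) (hnorm : ‖p‖ = ‖q‖) (hre' : p'.re = p.re) (hnorm' : ‖p'‖ = ‖p‖) :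
    K p q = K p' q' ↔ (p' = p ∧ q' = q) ∨ (p' = star p ∧ q' = star q) := by
  constructor
  · intro hK
    have hne : (K p q).Nonempty := K_nonempty_s2 hre hnorm
    have hcomm : Commute p' p := commute_of_K_subset hne hK.subset
    have normSq_eq : normSq p' = normSq p := by
      rw [normSq_eq_norm_mul_self, normSq_eq_norm_mul_self, hnorm']
    obtain ⟨x, hx⟩ := hne
    obtain ⟨-, rfl⟩ : x ∈ K p' q' := hK ▸ hx
    obtain ⟨-, rfl⟩ := hx
    rcases eq_or_eq_star_of_commute hcomm hre' normSq_eq with rfl | rfl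
    · exact .inl ⟨rfl, rfl⟩
    · exact .inr ⟨rfl, by simp only [star_mul, star_star, mul_assoc]⟩
  · rintro (⟨rfl, rfl⟩ | ⟨rfl, rfl⟩)
    · rfl
    · exact (K_star p q).symm

theorem statement2 (p q p' q' : Quaternion ℝ)
    (hp : p.re = 0) (hpn : ‖p‖ = 1) (hq : q.re = 0) (hqn : ‖q‖ = 1)
    (hp' : p'.re = 0) (hpn' : ‖p'‖ = 1) (hq' : q'.re = 0) (hqn' : ‖q'‖ = 1) :
    K p q = K p' q' ↔ (p' = p ∧ q' = q) ∨ (p' = -p ∧ q' = -q) := by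
  rw [← star_eq_neg.mpr hp, ← star_eq_neg.mpr hq]
  exact statement2_general q' (hp.trans hq.symm) (hpn.trans hqn.symm) (hp'.trans hp.symm)
    (hpn'.trans hpn.symm)
end

section
/- Let p, q be pure unit quaternions and l, r unit quaternions. Then { (conj l) * x * r : x ∈ K_p^q } = K_{(conj l) * p * l}^{(conj r) * q * r}, and { conj x : x ∈ K_p^q } = K_q^p. -/
/-! The unitary elements conjugating `p` to `q` are the arrows `p ⟶ q` of a groupoid: the product is
composition and `star` is inversion. The first image in the theorem comes from composing the arrows
`p ⟶ q` with the invertible arrows `star l : star l * p * l ⟶ p` and `r : q ⟶ star r * q * r`, the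
second from inverting them. -/

open Quaternion

section StarMonoid

variable {R : Type*} [Monoid R] [StarMul R] {p q s t u x y : R}

theorem star_mul_mul_mul_star_of_mem_unitary (hx : x ∈ unitary R) (hy : y ∈ unitary R) (z : R) :
    star x * (x * z * y) * star y = z := by
  calc star x * (x * z * y) * star y
      = (star x * x) * z * (y * star y) := by simp only [mul_assoc]
    _ = z := by
      rw [Unitary.star_mul_self_of_mem hx, Unitary.mul_star_self_of_mem hy, one_mul, mul_one]

/-- The transporter from `p` to `q` under conjugation by unitary elements of a star monoid. As in
`K`, an element `u` acts by `p ↦ star u * p * u`, so that products compose from left to right. -/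
def unitaryTransporter (p q : R) : Set R :=
  {u | u ∈ unitary R ∧ star u * p * u = q}

namespace unitaryTransporter

theorem mem_conj (hu : u ∈ unitary R) (p : R) : u ∈ unitaryTransporter p (star u * p * u) :=
  ⟨hu, rfl⟩

theorem mul_mem (hx : x ∈ unitaryTransporter p q) (hy : y ∈ unitaryTransporter q s) :
    x * y ∈ unitaryTransporter p s := by
  obtain ⟨hx, rfl⟩ := hx
  obtain ⟨hy, rfl⟩ := hy
  exact ⟨(unitary R).mul_mem hx hy, by simp only [star_mul, mul_assoc]⟩

theorem star_mem (hx : x ∈ unitaryTransporter p q) : star x ∈ unitaryTransporter q p := by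
  obtain ⟨hx, rfl⟩ := hx
  exact ⟨Unitary.star_mem hx, star_mul_mul_mul_star_of_mem_unitary (Unitary.star_mem hx) hx p⟩

theorem image_star (p q : R) : star '' unitaryTransporter p q = unitaryTransporter q p :=
  Set.BijOn.image_eq <| Set.InvOn.bijOn
    ⟨fun x _ => star_star x, fun x _ => star_star x⟩ (fun _ => star_mem) (fun _ => star_mem)

theorem image_mul_mul (hx : x ∈ unitaryTransporter s p) (hy : y ∈ unitaryTransporter q t) :
    (fun z => x * z * y) '' unitaryTransporter p q = unitaryTransporter s t := by
  have right_inverse (z : R) : x * (star x * z * star y) * y = z := by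
    simpa only [star_star] using
      star_mul_mul_mul_star_of_mem_unitary (Unitary.star_mem hx.1) (Unitary.star_mem hy.1) z
  exact Set.BijOn.image_eq <| Set.InvOn.bijOn (f' := fun z => star x * z * star y)
    ⟨fun z _ => star_mul_mul_mul_star_of_mem_unitary hx.1 hy.1 z, fun z _ => right_inverse z⟩
    (fun _ hz => mul_mem (mul_mem hx hz) hy)
    (fun _ hz => mul_mem (mul_mem (star_mem hx) hz) (star_mem hy))

end unitaryTransporter

open unitaryTransporter in
theorem statement3_general {l r : R} (p q : R) (hl : l ∈ unitary R) (hr : r ∈ unitary R) :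
    (fun x => star l * x * r) '' unitaryTransporter p q
        = unitaryTransporter (star l * p * l) (star r * q * r) ∧
    star '' unitaryTransporter p q = unitaryTransporter q p :=
  ⟨image_mul_mul (star_mem (mem_conj hl p)) (mem_conj hr q), image_star p q⟩

end StarMonoid

theorem mem_unitary_quaternion_iff_norm_eq_one {x : ℍ[ℝ]} : x ∈ unitary ℍ[ℝ] ↔ ‖x‖ = 1 := by
  refine ⟨CStarRing.norm_of_mem_unitary, fun hx => ?_⟩
  have normSq_eq_one : normSq x = 1 := by rw [normSq_eq_norm_mul_self, hx, one_mul]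
  rw [Unitary.mem_iff, star_mul_self, self_mul_star, normSq_eq_one, coe_one, and_self]

theorem K_eq_unitaryTransporter (p q : ℍ[ℝ]) : K p q = unitaryTransporter p q := by
  simp only [K, unitaryTransporter, mem_unitary_quaternion_iff_norm_eq_one]

theorem statement3 (p q l r : Quaternion ℝ)
    (hp : p.re = 0) (hpn : ‖p‖ = 1) (hq : q.re = 0) (hqn : ‖q‖ = 1)
    (hl : ‖l‖ = 1) (hr : ‖r‖ = 1) :
    (fun x : Quaternion ℝ => star l * x * r) '' K p q
        = K (star l * p * l) (star r * q * r) ∧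
    (fun x : Quaternion ℝ => star x) '' K p q = K q p := by
  simpa only [K_eq_unitaryTransporter] using statement3_general p q
    (mem_unitary_quaternion_iff_norm_eq_one.2 hl) (mem_unitary_quaternion_iff_norm_eq_one.2 hr)
end

section
/- Let p, q be pure unit quaternions and x ∈ K_p^q. Then for all φ, θ ∈ ℝ: exp(p(−φ)) * x * exp(qθ) = exp(p(θ−φ)) * x = x * exp(q(θ−φ)). In particular, x * exp(qθ) = exp(pθ) * x, so left multiplication by exp(pθ) and right multiplication by exp(qθ) have the same effect on K_p^q. -/
open Quaternion

/-- `exp(pθ) = cos θ + (sin θ) p`, a unit quaternion when `p` is a pure unit quaternion. -/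
noncomputable def eexp (p : Quaternion ℝ) (θ : ℝ) : Quaternion ℝ :=
  ((Real.cos θ : ℝ) : Quaternion ℝ) + (Real.sin θ) • p

/-!
A point `x` of `K_p^q` satisfies `x * q = p * x`: it intertwines `q` with `p`, and hence every real
polynomial in `q` with the same polynomial in `p`; in particular it intertwines `exp(qθ)` with
`exp(pθ)`. This moves all exponentials to one side of `x`. They then combine by the addition
formula, which holds because `p² = -1` makes `θ ↦ exp(pθ)` the image of `θ ↦ e^{iθ}` under the
algebra homomorphism `ℂ → ℍ` sending `i` to `p`.
-/

theorem mul_self_eq_neg_one_of_re_eq_zero_of_norm_eq_one {p : ℍ[ℝ]} (hp : p.re = 0)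
    (hpn : ‖p‖ = 1) : p * p = -1 := by
  rw [← sq, sq_eq_neg_normSq.mpr hp, normSq_eq_norm_mul_self, hpn, mul_one, coe_one]

theorem semiconjBy_of_mem_K {p q x : ℍ[ℝ]} (hx : x ∈ K p q) : SemiconjBy x q p := by
  obtain ⟨hxn, rfl⟩ := hx
  have hxx : x * star x = 1 := by
    rw [self_mul_star, normSq_eq_norm_mul_self, hxn, mul_one, coe_one]
  calc x * (star x * p * x) = x * star x * (p * x) := by simp only [mul_assoc]
    _ = p * x := by rw [hxx, one_mul]

theorem semiconjBy_eexp {p q x : ℍ[ℝ]} (h : SemiconjBy x q p) (θ : ℝ) :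
    SemiconjBy x (eexp q θ) (eexp p θ) :=
  SemiconjBy.add_right (coe_commute _ x).symm (h.smul_right _)

theorem eexp_eq_liftAux {p : ℍ[ℝ]} (hp : p * p = -1) (θ : ℝ) :
    eexp p θ = Complex.liftAux p hp (Complex.exp (θ * Complex.I)) := by
  rw [Complex.liftAux_apply, Complex.exp_ofReal_mul_I_re, Complex.exp_ofReal_mul_I_im,
    algebraMap_def, eexp]

theorem eexp_add {p : ℍ[ℝ]} (hp : p * p = -1) (θ φ : ℝ) :
    eexp p (θ + φ) = eexp p θ * eexp p φ := by
  simp only [eexp_eq_liftAux hp, Complex.ofReal_add, add_mul, Complex.exp_add, map_mul]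

theorem statement5 (p q : Quaternion ℝ)
    (hp : p.re = 0) (hpn : ‖p‖ = 1) (hq : q.re = 0) (hqn : ‖q‖ = 1)
    (x : Quaternion ℝ) (hx : x ∈ K p q) (φ θ : ℝ) :
    eexp p (-φ) * x * eexp q θ = eexp p (θ - φ) * x ∧
    eexp p (θ - φ) * x = x * eexp q (θ - φ) ∧
    x * eexp q θ = eexp p θ * x := by
  have hpp : p * p = -1 := mul_self_eq_neg_one_of_re_eq_zero_of_norm_eq_one hp hpn
  have hxK (t : ℝ) : x * eexp q t = eexp p t * x := semiconjBy_eexp (semiconjBy_of_mem_K hx) t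
  refine ⟨?_, (hxK _).symm, hxK θ⟩
  calc eexp p (-φ) * x * eexp q θ
      = eexp p (-φ) * eexp p θ * x := by rw [mul_assoc, hxK, mul_assoc]
    _ = eexp p (θ - φ) * x := by rw [← eexp_add hpp, neg_add_eq_sub]
end

section
/- Let p, q, p′, q′ be pure unit quaternions with ⟪p, p′⟫ = 0 and ⟪q, q′⟫ = 0. Then K_p^q ∩ K_{p′}^{q′} ≠ ∅; that is, there exists a unit quaternion x with (conj x) * p * x = q and (conj x) * p′ * x = q′ (a rotation of S² mapping p to q and p′ to q′ simultaneously). -/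
open Quaternion RealInnerProductSpace

/-!
If `a * a = b * b`, then `a - b` intertwines `b` with `-a`: it is the normal vector of the
hyperplane reflection exchanging `a` and `b`. Multiplying by a nonzero `e` anticommuting with `b`
removes the sign, just as the product of two reflections is a rotation. Orthogonal pure quaternions
anticommute, and since `ℍ` has dimension four there is a nonzero pure `e` orthogonal to both `q`
and `q'`. A first intertwiner `y` carries `q` to `p`. A second one `z` carries `q'` to
`r = y⁻¹ * p' * y`, and it commutes with `q` because `e` and `r - q'` are both orthogonal to `q`.
The product `y * z`, normalised, is the required unit quaternion.
-/

section Intertwiner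

theorem semiconjBy_sub_neg_of_mul_self_eq {R : Type*} [NonUnitalNonAssocRing R] {a b : R}
    (h : a * a = b * b) : SemiconjBy (a - b) b (-a) := by
  rw [SemiconjBy, sub_mul, neg_mul, mul_sub, ← h, neg_sub]

theorem exists_ne_zero_semiconjBy_of_mul_self_eq {R : Type*} [Ring R] [NoZeroDivisors R]
    {a b e : R} (h : a * a = b * b) (he : e ≠ 0) (heb : SemiconjBy e b (-b)) :
    ∃ z ≠ 0, SemiconjBy z b a ∧
      ∀ c, SemiconjBy e c (-c) → SemiconjBy (a - b) c (-c) → Commute z c := by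
  rcases eq_or_ne a b with rfl | hab
  · have : Nontrivial R := nontrivial_of_ne e 0 he
    exact ⟨1, one_ne_zero, .one_left a, fun c _ _ => .one_left c⟩
  · refine ⟨(a - b) * e, mul_ne_zero (sub_ne_zero.mpr hab) he, ?_, fun c hec hsub => ?_⟩
    · simpa only [neg_neg] using
        (semiconjBy_sub_neg_of_mul_self_eq h).neg_right.mul_left heb
    · simpa only [Commute, neg_neg] using hsub.neg_right.mul_left hec

theorem eq_of_semiconjBy_of_mem_center {M : Type*} [MonoidWithZero M] [IsLeftCancelMulZero M]
    {y a c : M} (hy : y ≠ 0) (h : SemiconjBy y a c) (hc : c ∈ Set.center M) : a = c :=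
  mul_left_cancel₀ hy (h.eq.trans (hc.comm y).eq)

theorem exists_ne_zero_semiconjBy_pair {D : Type*} [DivisionRing D] {p p' q q' e : D}
    (hpq : p * p = q * q) (hpq' : p' * p' = q' * q')
    (hanti : p * p' + p' * p = q * q' + q' * q)
    (hcenter : p' * p' ∈ Set.center D) (hcenter_anti : p * p' + p' * p ∈ Set.center D)
    (he : e ≠ 0) (heq : SemiconjBy e q (-q)) (heq' : SemiconjBy e q' (-q')) :
    ∃ x ≠ 0, SemiconjBy x q p ∧ SemiconjBy x q' p' := by
  obtain ⟨y, hy, hyq, -⟩ := exists_ne_zero_semiconjBy_of_mul_self_eq hpq he heq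
  obtain ⟨r, hr⟩ : ∃ r, SemiconjBy y r p' :=
    ⟨y⁻¹ * p' * y, by rw [SemiconjBy, mul_assoc, mul_inv_cancel_left₀ hy]⟩
  have hr_sq : r * r = q' * q' :=
    (eq_of_semiconjBy_of_mem_center hy (hr.mul_right hr) hcenter).trans hpq'
  have hr_anti : q * r + r * q = q * q' + q' * q :=
    (eq_of_semiconjBy_of_mem_center hy
      ((hyq.mul_right hr).add_right (hr.mul_right hyq)) hcenter_anti).trans hanti
  have hsub : SemiconjBy (r - q') q (-q) := by
    rw [SemiconjBy]
    linear_combination (norm := noncomm_ring) hr_anti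
  obtain ⟨z, hz, hzq', hzcomm⟩ := exists_ne_zero_semiconjBy_of_mul_self_eq hr_sq he heq'
  exact ⟨y * z, mul_ne_zero hy hz, hyq.mul_left (hzcomm q heq hsub), hr.mul_left hzq'⟩

end Intertwiner

theorem exists_ne_zero_forall_inner_eq_zero {𝕜 E ι : Type*} [RCLike 𝕜] [NormedAddCommGroup E]
    [InnerProductSpace 𝕜 E] [Fintype ι] (v : ι → E) (h : Fintype.card ι < Module.finrank 𝕜 E) :
    ∃ e ≠ 0, ∀ i, inner 𝕜 (v i) e = 0 := by
  have : FiniteDimensional 𝕜 E := Module.finite_of_finrank_pos (by lia)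
  have hspan : (Submodule.span 𝕜 (Set.range v))ᗮ ≠ ⊥ := by
    rw [Ne, Submodule.orthogonal_eq_bot_iff]
    intro htop
    have hcard := finrank_range_le_card (R := 𝕜) v
    rw [Set.finrank, htop, finrank_top] at hcard
    lia
  obtain ⟨e, he_mem, he⟩ := Submodule.exists_mem_ne_zero_of_ne_bot hspan
  exact ⟨e, he, fun i => he_mem (v i) (Submodule.subset_span ⟨i, rfl⟩)⟩

section Quaternion

theorem coe_mem_center (r : ℝ) : (r : ℍ[ℝ]) ∈ Set.center ℍ[ℝ] :=
  Set.algebraMap_mem_center r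

variable {a b : ℍ[ℝ]}

theorem mul_self_eq_neg_norm_sq_of_re_eq_zero (ha : a.re = 0) :
    a * a = ((-‖a‖ ^ 2 : ℝ) : ℍ[ℝ]) := by
  rw [← sq, Quaternion.sq_eq_neg_normSq.mpr ha, Quaternion.normSq_eq_norm_mul_self, sq]
  norm_cast

theorem mul_add_mul_eq_neg_two_mul_inner (ha : a.re = 0) (hb : b.re = 0) :
    a * b + b * a = ((-2 * ⟪a, b⟫ : ℝ) : ℍ[ℝ]) := by
  rw [Quaternion.inner_def]
  ext <;> simp [ha, hb] <;> ring

theorem semiconjBy_neg_of_inner_eq_zero (ha : a.re = 0) (hb : b.re = 0) (h : ⟪a, b⟫ = 0) :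
    SemiconjBy a b (-b) := by
  have hanti := mul_add_mul_eq_neg_two_mul_inner ha hb
  rw [h, mul_zero, Quaternion.coe_zero] at hanti
  rw [SemiconjBy, neg_mul]
  exact eq_neg_of_add_eq_zero_left hanti

theorem exists_ne_zero_semiconjBy_neg_pair (ha : a.re = 0) (hb : b.re = 0) :
    ∃ e ≠ 0, SemiconjBy e a (-a) ∧ SemiconjBy e b (-b) := by
  obtain ⟨e, he, horth⟩ := exists_ne_zero_forall_inner_eq_zero (𝕜 := ℝ) ![1, a, b]
    (by simp [Quaternion.finrank_eq_four])
  have he_re : e.re = 0 := by simpa [Quaternion.inner_def] using horth 0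
  have hea : ⟪e, a⟫ = 0 := (real_inner_comm a e).trans (horth 1)
  have heb : ⟪e, b⟫ = 0 := (real_inner_comm b e).trans (horth 2)
  exact ⟨e, he, semiconjBy_neg_of_inner_eq_zero he_re ha hea,
    semiconjBy_neg_of_inner_eq_zero he_re hb heb⟩

theorem star_mul_mul_eq_of_semiconjBy {x : ℍ[ℝ]} (hx : ‖x‖ = 1) (h : SemiconjBy x b a) :
    star x * a * x = b := by
  rw [mul_assoc, ← h.eq, ← mul_assoc, Quaternion.star_mul_self,
    Quaternion.normSq_eq_norm_mul_self, hx, mul_one, Quaternion.coe_one, one_mul]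

end Quaternion

theorem statement8_general (p q p' q' : ℍ[ℝ])
    (hp : p.re = 0) (hq : q.re = 0) (hp' : p'.re = 0) (hq' : q'.re = 0)
    (hnorm : ‖p‖ = ‖q‖) (hnorm' : ‖p'‖ = ‖q'‖) (hinner : ⟪p, p'⟫ = ⟪q, q'⟫) :
    ∃ x : ℍ[ℝ], ‖x‖ = 1 ∧ star x * p * x = q ∧ star x * p' * x = q' := by
  have hsq : p * p = q * q := by
    simp only [mul_self_eq_neg_norm_sq_of_re_eq_zero, hp, hq, hnorm]
  have hsq' : p' * p' = q' * q' := by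
    simp only [mul_self_eq_neg_norm_sq_of_re_eq_zero, hp', hq', hnorm']
  have hanti : p * p' + p' * p = q * q' + q' * q := by
    simp only [mul_add_mul_eq_neg_two_mul_inner, hp, hq, hp', hq', hinner]
  have hcenter : p' * p' ∈ Set.center ℍ[ℝ] :=
    mul_self_eq_neg_norm_sq_of_re_eq_zero hp' ▸ coe_mem_center _
  have hcenter_anti : p * p' + p' * p ∈ Set.center ℍ[ℝ] :=
    mul_add_mul_eq_neg_two_mul_inner hp hp' ▸ coe_mem_center _
  obtain ⟨e, he, heq, heq'⟩ := exists_ne_zero_semiconjBy_neg_pair hq hq'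
  obtain ⟨x, hx, hxq, hxq'⟩ :=
    exists_ne_zero_semiconjBy_pair hsq hsq' hanti hcenter hcenter_anti he heq heq'
  have hunit : ‖‖x‖⁻¹ • x‖ = 1 := norm_smul_inv_norm (𝕜 := ℝ) hx
  exact ⟨‖x‖⁻¹ • x, hunit, star_mul_mul_eq_of_semiconjBy hunit (hxq.smul_left _),
    star_mul_mul_eq_of_semiconjBy hunit (hxq'.smul_left _)⟩

theorem statement8 (p q p' q' : Quaternion ℝ)
    (hp : p.re = 0) (hpn : ‖p‖ = 1) (hq : q.re = 0) (hqn : ‖q‖ = 1)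
    (hp' : p'.re = 0) (hpn' : ‖p'‖ = 1) (hq' : q'.re = 0) (hqn' : ‖q'‖ = 1)
    (hpp' : ⟪p, p'⟫ = 0) (hqq' : ⟪q, q'⟫ = 0) :
    ∃ x : Quaternion ℝ, ‖x‖ = 1 ∧ star x * p * x = q ∧ star x * p' * x = q' :=
  statement8_general p q p' q' hp hq hp' hq' (hpn.trans hqn.symm) (hpn'.trans hqn'.symm)
    (hpp'.trans hqq'.symm)
end

section
/- Any two left Hopf bundles are congruent by a right rotation: for all pure unit quaternions q, q′ there exists a unit quaternion r such that for every pure unit quaternion p, { x * r : x ∈ K_p^{q} } = K_p^{q′}. -/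
open Quaternion

/-!
Right translation by a unit quaternion `r` carries `K p q` onto `K p (r⁻¹ * q * r)`, so it suffices
to conjugate `q` to `q'` by a unit quaternion. Since `q` and `q'` have the same real part and norm,
they are roots of the same real quadratic polynomial, whence `s = q * x - x * star q'` satisfies
`q * s = s * q'` for every `x`. If all these `s` vanish, then `x = 1` gives `q = star q'`, so `q` is
central, hence real, and therefore `q = q'`.
-/

section CommRing

variable {R : Type*} [CommRing R] {a b : ℍ[R]}

theorem semiconjBy_mul_sub_mul_star (hre : a.re = b.re) (hnorm : normSq a = normSq b) (x : ℍ[R]) :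
    SemiconjBy (a * x - x * star b) b a := by
  have trace_eq : a + star a = b + star b := by rw [self_add_star', self_add_star', hre]
  have trace_comm : (a + star a) * x = x * (a + star a) := by
    rw [self_add_star', coe_commutes]
  have norm_comm : a * star a * x = x * (star b * b) := by
    rw [self_mul_star, star_mul_self, hnorm, coe_commutes]
  have quadratic_eq : a * (a * x) + x * (star b * b) = a * (x * (b + star b)) := by
    calc a * (a * x) + x * (star b * b) = a * ((a + star a) * x) := by
          rw [← norm_comm]; noncomm_ring
      _ = a * (x * (b + star b)) := by rw [trace_comm, trace_eq]
  calc (a * x - x * star b) * b = a * (x * (b + star b)) - x * (star b * b) - a * x * star b := by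
        noncomm_ring
    _ = a * (a * x - x * star b) := by rw [← quadratic_eq]; noncomm_ring

theorem star_eq_self_of_forall_commute (h : ∀ x, Commute a x) : star a = a := by
  have imJ_comm (x : ℍ[R]) : (a * x).imJ = (x * a).imJ := by rw [h x]
  have imK_comm (x : ℍ[R]) : (a * x).imK = (x * a).imK := by rw [h x]
  simp only [Quaternion.imJ_mul, Quaternion.imK_mul] at imJ_comm imK_comm
  have neg_imI : -a.imI = a.imI := by simpa using (imK_comm ⟨0, 0, 1, 0⟩).symm
  have neg_imJ : -a.imJ = a.imJ := by simpa using imK_comm ⟨0, 1, 0, 0⟩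
  have neg_imK : -a.imK = a.imK := by simpa using (imJ_comm ⟨0, 1, 0, 0⟩).symm
  exact Quaternion.ext _ _ (re_star a) neg_imI neg_imJ neg_imK

theorem exists_ne_zero_semiconjBy [Nontrivial R] (hre : a.re = b.re) (hnorm : normSq a = normSq b) :
    ∃ s : ℍ[R], s ≠ 0 ∧ SemiconjBy s b a := by
  by_contra! h
  have mul_eq (x : ℍ[R]) : a * x = x * star b := by
    by_contra hx
    exact h _ (sub_ne_zero.mpr hx) (semiconjBy_mul_sub_mul_star hre hnorm x)
  have a_eq_star : a = star b := by simpa only [mul_one, one_mul] using mul_eq 1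
  have star_a : star a = a :=
    star_eq_self_of_forall_commute fun x => (mul_eq x).trans (by rw [← a_eq_star])
  have b_eq : b = a := by rw [← star_a, a_eq_star, star_star]
  exact h 1 one_ne_zero (b_eq ▸ SemiconjBy.one_left b)

end CommRing

theorem exists_norm_eq_one_semiconjBy {q q' : ℍ[ℝ]} (hre : q.re = q'.re) (hnorm : ‖q‖ = ‖q'‖) :
    ∃ r : ℍ[ℝ], ‖r‖ = 1 ∧ SemiconjBy r q' q := by
  have normSq_eq : normSq q = normSq q' := by
    rw [normSq_eq_norm_mul_self, normSq_eq_norm_mul_self, hnorm]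
  obtain ⟨s, hs, hsq⟩ := exists_ne_zero_semiconjBy hre normSq_eq
  refine ⟨‖s‖⁻¹ • s, norm_smul_inv_norm (𝕜 := ℝ) hs, ?_⟩
  rw [SemiconjBy, smul_mul_assoc, mul_smul_comm, hsq.eq]

namespace K

variable {p q q' r x : ℍ[ℝ]}

theorem mul_mem (hr : ‖r‖ = 1) (h : SemiconjBy r q' q) (hx : x ∈ K p q) : x * r ∈ K p q' := by
  obtain ⟨hx_norm, hx_conj⟩ := hx
  have star_mul_r : star r * r = 1 := by
    rw [star_mul_self, normSq_eq_norm_mul_self, hr, mul_one, coe_one]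
  refine ⟨by rw [norm_mul, hx_norm, hr, mul_one], ?_⟩
  calc star (x * r) * p * (x * r) = star r * (star x * p * x * r) := by
        simp only [star_mul, mul_assoc]
    _ = star r * (r * q') := by rw [hx_conj, h.eq]
    _ = q' := by rw [← mul_assoc, star_mul_r, one_mul]

theorem image_mul_right (hr : ‖r‖ = 1) (h : SemiconjBy r q' q) :
    (fun x => x * r) '' K p q = K p q' := by
  have r_ne_zero : r ≠ 0 := norm_ne_zero_iff.mp (by rw [hr]; exact one_ne_zero)
  have norm_r_inv : ‖r⁻¹‖ = 1 := by rw [norm_inv, hr, inv_one]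
  refine Set.Subset.antisymm (Set.image_subset_iff.mpr fun x => mul_mem hr h) fun y hy => ?_
  exact ⟨y * r⁻¹, mul_mem norm_r_inv h.inv_symm_left₀ hy, inv_mul_cancel_right₀ r_ne_zero y⟩

end K

theorem statement9_general {q q' : ℍ[ℝ]} (hre : q.re = q'.re) (hnorm : ‖q‖ = ‖q'‖) :
    ∃ r : ℍ[ℝ], ‖r‖ = 1 ∧ ∀ p : ℍ[ℝ], (fun x => x * r) '' K p q = K p q' := by
  obtain ⟨r, hr, hrq⟩ := exists_norm_eq_one_semiconjBy hre hnorm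
  exact ⟨r, hr, fun _ => K.image_mul_right hr hrq⟩

theorem statement9 (q q' : Quaternion ℝ)
    (hq : q.re = 0) (hqn : ‖q‖ = 1) (hq' : q'.re = 0) (hqn' : ‖q'‖ = 1) :
    ∃ r : Quaternion ℝ, ‖r‖ = 1 ∧
      ∀ p : Quaternion ℝ, p.re = 0 → ‖p‖ = 1 →
        (fun x : Quaternion ℝ => x * r) '' K p q = K p q' := by
  obtain ⟨r, hr, himage⟩ := statement9_general (hq.trans hq'.symm) (hqn.trans hqn'.symm)
  exact ⟨r, hr, fun p _ _ => himage p⟩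
end

section
/- Let q₀ be a pure unit quaternion and φ ∈ ℝ. The right rotation x ↦ x * exp(q₀φ) maps every circle of the left Hopf bundle ℋ^{q₀} onto itself and rotates every point of S³ by the same angle |φ|: for every pure unit quaternion p and every x ∈ K_p^{q₀}, one has x * exp(q₀φ) ∈ K_p^{q₀} and ⟪x, x * exp(q₀φ)⟫ = cos φ. -/
open Quaternion RealInnerProductSpace

theorem mul_mem_K {p q r x y : ℍ[ℝ]} (hx : x ∈ K p q) (hy : y ∈ K q r) : x * y ∈ K p r := by
  obtain ⟨hx_norm, hx_conj⟩ := hx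
  obtain ⟨hy_norm, hy_conj⟩ := hy
  refine ⟨by rw [norm_mul, hx_norm, hy_norm, one_mul], ?_⟩
  calc star (x * y) * p * (x * y) = star y * (star x * p * x) * y := by
        simp only [star_mul, mul_assoc]
    _ = r := by rw [hx_conj, hy_conj]

theorem mem_K_self_of_commute {q u : ℍ[ℝ]} (hu : ‖u‖ = 1) (hqu : Commute q u) : u ∈ K q q := by
  refine ⟨hu, ?_⟩
  rw [mul_assoc, hqu.eq, ← mul_assoc, Quaternion.star_mul_self, normSq_eq_norm_mul_self, hu,
    one_mul, coe_one, one_mul]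

theorem commute_eexp (q : ℍ[ℝ]) (θ : ℝ) : Commute q (eexp q θ) :=
  (coe_commute (Real.cos θ) q).symm.add_right ((Commute.refl q).smul_right (Real.sin θ))

theorem re_eexp {q : ℍ[ℝ]} (hq : q.re = 0) (θ : ℝ) : (eexp q θ).re = Real.cos θ := by
  simp [eexp, hq]

theorem norm_eexp {q : ℍ[ℝ]} (hq : q.re = 0) (hq_norm : ‖q‖ = 1) (θ : ℝ) : ‖eexp q θ‖ = 1 := by
  have re_mul_star_eq_zero : ((Real.cos θ : ℍ[ℝ]) * star (Real.sin θ • q)).re = 0 := by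
    simp [hq]
  have norm_sq_eq_one : ‖eexp q θ‖ ^ 2 = 1 := calc
    ‖eexp q θ‖ ^ 2 = normSq (eexp q θ) := by rw [normSq_eq_norm_mul_self, sq]
    _ = Real.cos θ ^ 2 + Real.sin θ ^ 2 * normSq q := by
      rw [eexp, normSq_add, re_mul_star_eq_zero, normSq_coe, normSq_smul, mul_zero, add_zero]
    _ = 1 := by
      rw [normSq_eq_norm_mul_self, hq_norm, mul_one, mul_one, Real.cos_sq_add_sin_sq]
  exact (pow_eq_one_iff_of_nonneg (norm_nonneg _) two_ne_zero).1 norm_sq_eq_one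

theorem inner_mul_mul_eq_norm_sq_mul_inner (x a b : ℍ[ℝ]) :
    ⟪x * a, x * b⟫ = ‖x‖ ^ 2 * ⟪a, b⟫ := by
  simp only [real_inner_eq_norm_add_mul_self_sub_norm_mul_self_sub_norm_mul_self_div_two,
    ← mul_add, norm_mul]
  ring

theorem inner_self_mul_eq_norm_sq_mul_re (x y : ℍ[ℝ]) : ⟪x, x * y⟫ = ‖x‖ ^ 2 * y.re := calc
  ⟪x, x * y⟫ = ‖x‖ ^ 2 * ⟪(1 : ℍ[ℝ]), y⟫ := by
    rw [← inner_mul_mul_eq_norm_sq_mul_inner, mul_one]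
  _ = ‖x‖ ^ 2 * y.re := by rw [inner_def, one_mul, re_star]

theorem statement10 (q₀ : Quaternion ℝ)
    (hq : q₀.re = 0) (hqn : ‖q₀‖ = 1) (φ : ℝ) :
    ∀ p : Quaternion ℝ, p.re = 0 → ‖p‖ = 1 →
      ∀ x ∈ K p q₀,
        x * eexp q₀ φ ∈ K p q₀ ∧ ⟪x, x * eexp q₀ φ⟫ = Real.cos φ := by
  intro p _ _ x hx
  have eexp_mem : eexp q₀ φ ∈ K q₀ q₀ :=
    mem_K_self_of_commute (norm_eexp hq hqn φ) (commute_eexp q₀ φ)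
  refine ⟨mul_mem_K hx eexp_mem, ?_⟩
  rw [inner_self_mul_eq_norm_sq_mul_re, hx.1, re_eexp hq, one_pow, one_mul]
end

section
/- Let q₀ be a pure unit quaternion and l, r unit quaternions. The rotation x ↦ (conj l) * x * r maps the left Hopf bundle ℋ^{q₀} onto itself — i.e., for every pure unit quaternion p there is a pure unit quaternion p′ with { (conj l) * x * r : x ∈ K_p^{q₀} } = K_{p′}^{q₀} — if and only if (conj r) * q₀ * r = q₀ or (conj r) * q₀ * r = −q₀. -/
open Quaternion

/-!
Since `x` is a unit quaternion, `x ∈ K p q` means that `x` intertwines `q` with `p`, that is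
`x * q = p * x`. Hence the rotation carries `K p q` onto `K (star l * p * l) (star r * q * r)`.
Moreover a circle determines its right label up to sign: if `x` and `x * q` both lie in
`K p' q'`, then `x * q' * q = p' * x * q = x * q * q'`, so `q` commutes with `q'`, and two
commuting square roots of `-1` in a division ring agree up to sign. Thus a rotation carrying even a
single fibre to a fibre must satisfy `star r * q * r = ± q`; the converse follows from
`K (-p) (-q) = K p q`.
-/

section PureUnit

variable {x p q : ℍ[ℝ]}

theorem sq_eq_neg_one_iff_re_eq_zero_and_norm_eq_one : q ^ 2 = -1 ↔ q.re = 0 ∧ ‖q‖ = 1 := by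
  have normSq_eq_one (hq : ‖q‖ = 1) : normSq q = 1 := by simp [normSq_eq_norm_mul_self, hq]
  constructor
  · intro h
    have hnorm : ‖q‖ = 1 := by
      rw [← pow_eq_one_iff_of_nonneg (norm_nonneg q) two_ne_zero, ← norm_pow, h, norm_neg, norm_one]
    exact ⟨sq_eq_neg_normSq.1 (by simp [h, normSq_eq_one hnorm]), hnorm⟩
  · rintro ⟨hre, hnorm⟩
    simp [sq_eq_neg_normSq.2 hre, normSq_eq_one hnorm]

theorem star_eq_inv_of_norm_eq_one (hx : ‖x‖ = 1) : star x = x⁻¹ := by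
  rw [Quaternion.inv_def, normSq_eq_norm_mul_self, hx, one_mul, inv_one, one_smul]

theorem sq_star_mul_mul_eq_neg_one (hx : ‖x‖ = 1) (hq : q ^ 2 = -1) :
    (star x * q * x) ^ 2 = -1 := by
  have hx₀ : x ≠ 0 := norm_ne_zero_iff.1 (by simp [hx])
  rw [star_eq_inv_of_norm_eq_one hx]
  calc (x⁻¹ * q * x) ^ 2 = x⁻¹ * q ^ 2 * x := by simp [sq, mul_assoc, hx₀]
    _ = -1 := by simp [hq, hx₀]

theorem eq_coe_re_of_forall_commute {R : Type*} [CommRing R] [IsAddTorsionFree R] {a : ℍ[R]}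
    (ha : ∀ u, Commute u a) : a = a.re := by
  have himJ (u : ℍ[R]) : (u * a).imJ = (a * u).imJ := by rw [ha u]
  have himK (u : ℍ[R]) : (u * a).imK = (a * u).imK := by rw [ha u]
  simp only [imJ_mul, imK_mul] at himJ himK
  have hI : a.imI = 0 := by simpa [neg_eq_self] using himK ⟨0, 0, 1, 0⟩
  have hJ : a.imJ = 0 := by simpa [self_eq_neg] using himK ⟨0, 1, 0, 0⟩
  have hK : a.imK = 0 := by simpa [neg_eq_self] using himJ ⟨0, 1, 0, 0⟩
  exact Quaternion.ext _ _ rfl hI hJ hK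

theorem exists_not_commute_of_sq_eq_neg_one (hp : p ^ 2 = -1) : ∃ u, ¬ Commute u p := by
  obtain ⟨hre, hnorm⟩ := sq_eq_neg_one_iff_re_eq_zero_and_norm_eq_one.1 hp
  by_contra! hcomm
  have hzero : p = 0 := by simpa [hre] using eq_coe_re_of_forall_commute hcomm
  simp [hzero] at hnorm

end PureUnit

-- The intertwiner averages `u` over the involution `u ↦ p * u * q⁻¹`, where `q⁻¹ = -q`.
theorem semiconjBy_sub_mul_mul {A : Type*} [Ring A] {p q : A} (hp : p ^ 2 = -1) (hq : q ^ 2 = -1)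
    (u : A) : SemiconjBy (u - p * u * q) q p := by
  rw [SemiconjBy]
  calc (u - p * u * q) * q = u * q - p * u * q ^ 2 := by noncomm_ring
    _ = p * u - p ^ 2 * u * q := by rw [hp, hq]; noncomm_ring
    _ = p * (u - p * u * q) := by noncomm_ring

theorem exists_ne_zero_semiconjBy_s11 {p q : ℍ[ℝ]} (hp : p ^ 2 = -1) (hq : q ^ 2 = -1) :
    ∃ x ≠ 0, SemiconjBy x q p := by
  by_contra! hzero
  have hfix (u : ℍ[ℝ]) : u = p * u * q := by
    by_contra hu
    exact hzero _ (sub_ne_zero.2 hu) (semiconjBy_sub_mul_mul hp hq u)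
  have hpq : p * q = 1 := by simpa using (hfix 1).symm
  obtain ⟨u, hu⟩ := exists_not_commute_of_sq_eq_neg_one hp
  refine hu ?_
  have hqp : q * p = 1 := mul_eq_one_comm.1 hpq
  calc u * p = p * u * q * p := by rw [← hfix u]
    _ = p * u := by rw [mul_assoc, hqp, mul_one]

namespace K

variable {p q p' q' l r x : ℍ[ℝ]}

theorem mem_iff_semiconjBy : x ∈ K p q ↔ ‖x‖ = 1 ∧ SemiconjBy x q p := by
  refine and_congr_right fun hx => ?_
  have hx₀ : x ≠ 0 := norm_ne_zero_iff.1 (by simp [hx])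
  rw [star_eq_inv_of_norm_eq_one hx, mul_assoc, inv_mul_eq_iff_eq_mul₀ hx₀, eq_comm, SemiconjBy]

theorem nonempty_of_sq_eq_neg_one (hp : p ^ 2 = -1) (hq : q ^ 2 = -1) : (K p q).Nonempty := by
  obtain ⟨x, hx₀, hx⟩ := exists_ne_zero_semiconjBy_s11 hp hq
  exact ⟨‖x‖⁻¹ • x, mem_iff_semiconjBy.2 ⟨norm_smul_inv_norm hx₀, hx.smul_left _⟩⟩

protected theorem neg_neg (p q : ℍ[ℝ]) : K (-p) (-q) = K p q := by
  simp [K]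

theorem mul_right_mem (hq : ‖q‖ = 1) (hx : x ∈ K p q) : x * q ∈ K p q := by
  rw [mem_iff_semiconjBy] at hx ⊢
  exact ⟨by simp [hx.1, hq], hx.2.mul_left (Commute.refl q)⟩

theorem star_mul_mul_mem_iff (hl : ‖l‖ = 1) (hr : ‖r‖ = 1) :
    x ∈ K (star l * p * l) (star r * q * r) ↔ l * x * star r ∈ K p q := by
  have hr₀ : r ≠ 0 := norm_ne_zero_iff.1 (by simp [hr])
  have hnorm : ‖l * x * star r‖ = ‖x‖ := by simp [hl, hr]
  have hconj : star (l * x * star r) * p * (l * x * star r)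
      = r * (star x * (star l * p * l) * x) * star r := by
    simp only [star_mul, star_star, mul_assoc]
  rw [K, K, Set.mem_ofPred_eq, Set.mem_ofPred_eq, hnorm, hconj, star_eq_inv_of_norm_eq_one hr,
    mul_inv_eq_iff_eq_mul₀ hr₀, mul_assoc r⁻¹, eq_inv_mul_iff_mul_eq₀ hr₀]

theorem image_star_mul_mul (hl : ‖l‖ = 1) (hr : ‖r‖ = 1) (p q : ℍ[ℝ]) :
    (fun x => star l * x * r) '' K p q = K (star l * p * l) (star r * q * r) := by
  have hl₀ : l ≠ 0 := norm_ne_zero_iff.1 (by simp [hl])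
  have hr₀ : r ≠ 0 := norm_ne_zero_iff.1 (by simp [hr])
  rw [Set.image_eq_preimage_of_inverse (g := fun x => l * x * star r)]
  · ext x
    exact (star_mul_mul_mem_iff hl hr).symm
  · intro x
    simp [star_eq_inv_of_norm_eq_one, hl, hr, hl₀, hr₀, mul_assoc]
  · intro x
    simp [star_eq_inv_of_norm_eq_one, hl, hr, hl₀, hr₀, mul_assoc]

theorem commute_of_subset (hq : ‖q‖ = 1) (hne : (K p q).Nonempty) (hsub : K p q ⊆ K p' q') :
    Commute q q' := by
  obtain ⟨x, hx⟩ := hne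
  obtain ⟨hnorm, hxq'⟩ := mem_iff_semiconjBy.1 (hsub hx)
  have hxqq' := (mem_iff_semiconjBy.1 (hsub (mul_right_mem hq hx))).2
  have hx₀ : x ≠ 0 := norm_ne_zero_iff.1 (by simp [hnorm])
  refine mul_left_cancel₀ hx₀ ?_
  calc x * (q * q') = p' * (x * q) := by rw [← mul_assoc, hxqq'.eq]
    _ = x * (q' * q) := by rw [← mul_assoc, ← hxq'.eq, mul_assoc]

theorem right_eq_or_eq_neg_of_subset (hq : q ^ 2 = -1) (hq' : q' ^ 2 = -1)
    (hne : (K p q).Nonempty) (hsub : K p q ⊆ K p' q') : q' = q ∨ q' = -q := by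
  have hnorm : ‖q‖ = 1 := (sq_eq_neg_one_iff_re_eq_zero_and_norm_eq_one.1 hq).2
  have hcomm : Commute q' q := (commute_of_subset hnorm hne hsub).symm
  exact hcomm.sq_eq_sq_iff_eq_or_eq_neg.1 (hq'.trans hq.symm)

end K

theorem statement11_general {p q l r : ℍ[ℝ]} (hp : p.re = 0) (hpn : ‖p‖ = 1)
    (hq : q.re = 0) (hqn : ‖q‖ = 1) (hl : ‖l‖ = 1) (hr : ‖r‖ = 1) :
    (∃ p' : ℍ[ℝ], p'.re = 0 ∧ ‖p'‖ = 1 ∧ (fun x => star l * x * r) '' K p q = K p' q) ↔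
      (star r * q * r = q ∨ star r * q * r = -q) := by
  have hp2 : p ^ 2 = -1 := sq_eq_neg_one_iff_re_eq_zero_and_norm_eq_one.2 ⟨hp, hpn⟩
  have hq2 : q ^ 2 = -1 := sq_eq_neg_one_iff_re_eq_zero_and_norm_eq_one.2 ⟨hq, hqn⟩
  have hlp2 : (star l * p * l) ^ 2 = -1 := sq_star_mul_mul_eq_neg_one hl hp2
  have hrq2 : (star r * q * r) ^ 2 = -1 := sq_star_mul_mul_eq_neg_one hr hq2
  simp only [← and_assoc, ← sq_eq_neg_one_iff_re_eq_zero_and_norm_eq_one,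
    K.image_star_mul_mul hl hr]
  constructor
  · rintro ⟨p', hp'2, himage⟩
    exact K.right_eq_or_eq_neg_of_subset hq2 hrq2 (K.nonempty_of_sq_eq_neg_one hp'2 hq2)
      himage.superset
  · rintro (h | h)
    · exact ⟨star l * p * l, hlp2, by rw [h]⟩
    · refine ⟨-(star l * p * l), by rw [neg_sq, hlp2], ?_⟩
      rw [h, ← K.neg_neg (star l * p * l), neg_neg]

theorem statement11 (q₀ l r : Quaternion ℝ)
    (hq : q₀.re = 0) (hqn : ‖q₀‖ = 1) (hl : ‖l‖ = 1) (hr : ‖r‖ = 1) :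
    (∀ p : Quaternion ℝ, p.re = 0 → ‖p‖ = 1 →
      ∃ p' : Quaternion ℝ, p'.re = 0 ∧ ‖p'‖ = 1 ∧
        (fun x : Quaternion ℝ => star l * x * r) '' K p q₀ = K p' q₀) ↔
    (star r * q₀ * r = q₀ ∨ star r * q₀ * r = -q₀) :=
  ⟨fun h => (statement11_general hq hqn hq hqn hl hr).1 (h q₀ hq hqn),
    fun h _ hp hpn => (statement11_general hp hpn hq hqn hl hr).2 h⟩
end

section
/- Write a unit quaternion as x = a + b i + c j + d k. Then K_i^i = { x ∈ S³ : c = d = 0 } (the great circle in the span of 1 and i) and K_i^{−i} = { x ∈ S³ : a = b = 0 } (the great circle in the span of j and k), and the standard Clifford torus has the equation: x ∈ 𝕋_i^i if and only if a² + b² = c² + d² (equivalently a² + b² = 1/2). -/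
open Quaternion RealInnerProductSpace

/-- The geodesic (angular) distance from a point `x` of `S³` to a subset `A` of `S³`:
`d(x, A) = inf_{y ∈ A} arccos ⟪x, y⟫`. -/
noncomputable def sdist (x : Quaternion ℝ) (A : Set (Quaternion ℝ)) : ℝ :=
  sInf ((fun y => Real.arccos ⟪x, y⟫) '' A)

/-- The Clifford torus `𝕋_p^q`: the points of `S³` equidistant from the two
absolutely orthogonal great circles `K_p^q` and `K_p^{-q}`. -/
noncomputable def CT (p q : Quaternion ℝ) : Set (Quaternion ℝ) :=
  {x : Quaternion ℝ | ‖x‖ = 1 ∧ sdist x (K p q) = sdist x (K p (-q))}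

/-- The quaternion unit `i`. -/
def qi : Quaternion ℝ := ⟨0, 1, 0, 0⟩

/-
For pure unit `p` and `q` the map `x ↦ p * x * q` is a self-adjoint involution of `ℍ`. Its
eigenspaces for `-1` and `1`, described by `p * x = x * q` and `p * x = x * (-q)`, have `K p q` and
`K p (-q)` as unit spheres, and the orthogonal projections onto them are `(x ∓ p * x * q) / 2`. The
angular distance from `x` to the unit sphere of a nonzero subspace is the arccosine of the norm of
the projection of `x`. Hence `x` lies on the Clifford torus iff its two projections have equal
norms, i.e. iff `x` is orthogonal to `p * x * q`; for `p = q = i` and `x = a + bi + cj + dk` that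
inner product is `c² + d² - a² - b²`.
-/

section InnerProductSpace

variable {E : Type*} [NormedAddCommGroup E] [InnerProductSpace ℝ E]

lemma real_inner_le_norm_starProjection (U : Submodule ℝ E) [U.HasOrthogonalProjection] (x : E)
    {y : E} (hy : y ∈ U) (hy_norm : ‖y‖ = 1) : ⟪x, y⟫ ≤ ‖U.starProjection x‖ :=
  calc ⟪x, y⟫ = ⟪U.starProjection x, y⟫ := by
        rw [U.inner_starProjection_left_eq_right, Submodule.starProjection_eq_self_iff.2 hy]
    _ ≤ ‖U.starProjection x‖ * ‖y‖ := real_inner_le_norm _ _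
    _ = ‖U.starProjection x‖ := by rw [hy_norm, mul_one]

lemma exists_real_inner_eq_norm_starProjection {U : Submodule ℝ E} [U.HasOrthogonalProjection]
    (hU : U ≠ ⊥) (x : E) : ∃ y ∈ U, ‖y‖ = 1 ∧ ⟪x, y⟫ = ‖U.starProjection x‖ := by
  by_cases hx : U.starProjection x = 0
  · obtain ⟨z, hzU, hz⟩ := U.exists_mem_ne_zero_of_ne_bot hU
    refine ⟨‖z‖⁻¹ • z, U.smul_mem _ hzU, norm_smul_inv_norm (𝕜 := ℝ) hz, ?_⟩
    have hxz : ⟪x, z⟫ = 0 := by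
      rw [← Submodule.starProjection_eq_self_iff.2 hzU, ← U.inner_starProjection_left_eq_right, hx,
        inner_zero_left]
    rw [inner_smul_right, hxz, mul_zero, hx, norm_zero]
  · refine ⟨‖U.starProjection x‖⁻¹ • U.starProjection x,
      U.smul_mem _ (U.starProjection_apply_mem x), norm_smul_inv_norm (𝕜 := ℝ) hx, ?_⟩
    have hinner : ⟪x, U.starProjection x⟫ = ‖U.starProjection x‖ ^ 2 := by
      simpa [real_inner_comm] using U.re_inner_starProjection_eq_normSq x
    rw [inner_smul_right, hinner, sq, inv_mul_cancel_left₀ (norm_ne_zero_iff.2 hx)]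

lemma isLeast_arccos_inner_unitSphere {U : Submodule ℝ E} [U.HasOrthogonalProjection]
    (hU : U ≠ ⊥) (x : E) :
    IsLeast ((fun y => Real.arccos ⟪x, y⟫) '' {y | ‖y‖ = 1 ∧ y ∈ U})
      (Real.arccos ‖U.starProjection x‖) := by
  constructor
  · obtain ⟨y, hyU, hy, hxy⟩ := exists_real_inner_eq_norm_starProjection hU x
    exact ⟨y, ⟨hy, hyU⟩, congrArg Real.arccos hxy⟩
  · rintro _ ⟨y, ⟨hy, hyU⟩, rfl⟩
    exact Real.arccos_le_arccos (real_inner_le_norm_starProjection U x hyU hy)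

end InnerProductSpace

section Quaternion

variable {p q x : Quaternion ℝ}

lemma quaternion_norm_sq (x : Quaternion ℝ) :
    ‖x‖ ^ 2 = x.re ^ 2 + x.imI ^ 2 + x.imJ ^ 2 + x.imK ^ 2 := by
  rw [← Quaternion.normSq_def', Quaternion.normSq_eq_norm_mul_self, sq]

lemma quaternion_inner_mul_left (a x y : Quaternion ℝ) : ⟪a * x, y⟫ = ⟪x, star a * y⟫ := by
  simp only [Quaternion.inner_def, Quaternion.re_mul, Quaternion.imI_mul, Quaternion.imJ_mul,
    Quaternion.imK_mul, Quaternion.re_star, Quaternion.imI_star, Quaternion.imJ_star,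
    Quaternion.imK_star]
  ring

lemma quaternion_inner_mul_right (a x y : Quaternion ℝ) : ⟪x * a, y⟫ = ⟪x, y * star a⟫ := by
  simp only [Quaternion.inner_def, star_mul, star_star, mul_assoc]

/-- The pure unit quaternions, i.e. the points of the 2-sphere `S²` that index the great circles
`K p q`. -/
structure IsPureUnit (p : Quaternion ℝ) : Prop where
  re_eq_zero : p.re = 0
  norm_eq_one : ‖p‖ = 1

namespace IsPureUnit

lemma star_eq_neg (hp : IsPureUnit p) : star p = -p :=
  Quaternion.star_eq_neg.2 hp.re_eq_zero

lemma mul_self_eq_neg_one (hp : IsPureUnit p) : p * p = -1 := by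
  rw [← sq, Quaternion.sq_eq_neg_normSq.2 hp.re_eq_zero, Quaternion.normSq_eq_norm_mul_self,
    hp.norm_eq_one, mul_one, Quaternion.coe_one]

lemma neg (hp : IsPureUnit p) : IsPureUnit (-p) :=
  ⟨by rw [Quaternion.re_neg, hp.re_eq_zero, neg_zero], by rw [norm_neg, hp.norm_eq_one]⟩

lemma inner_mul_mul (hp : IsPureUnit p) (hq : IsPureUnit q) (x y : Quaternion ℝ) :
    ⟪p * x * q, y⟫ = ⟪x, p * y * q⟫ := by
  rw [quaternion_inner_mul_right, quaternion_inner_mul_left, hp.star_eq_neg, hq.star_eq_neg,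
    mul_neg, neg_mul_neg, mul_assoc]

end IsPureUnit

@[simp] lemma qi_re : qi.re = 0 := rfl

@[simp] lemma qi_imI : qi.imI = 1 := rfl

@[simp] lemma qi_imJ : qi.imJ = 0 := rfl

@[simp] lemma qi_imK : qi.imK = 0 := rfl

lemma isPureUnit_qi : IsPureUnit qi where
  re_eq_zero := rfl
  norm_eq_one := (sq_eq_sq₀ (norm_nonneg _) zero_le_one).1 <| by simp [quaternion_norm_sq]

/-- The real subspace of the quaternions `x` with `p * x = x * q`; its unit sphere is `K p q`. -/
noncomputable def intertwiners (p q : Quaternion ℝ) : Submodule ℝ (Quaternion ℝ) :=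
  LinearMap.eqLocus (LinearMap.mulLeft ℝ p) (LinearMap.mulRight ℝ q)

lemma mem_intertwiners : x ∈ intertwiners p q ↔ p * x = x * q := Iff.rfl

lemma star_mul_mul_eq_iff (hx : ‖x‖ = 1) : star x * p * x = q ↔ p * x = x * q := by
  have hx_normSq : Quaternion.normSq x = 1 := by
    rw [Quaternion.normSq_eq_norm_mul_self, hx, mul_one]
  constructor
  · rintro rfl
    rw [← mul_assoc, ← mul_assoc, Quaternion.self_mul_star, hx_normSq, Quaternion.coe_one, one_mul]
  · intro h
    rw [mul_assoc, h, ← mul_assoc, Quaternion.star_mul_self, hx_normSq, Quaternion.coe_one, one_mul]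

lemma K_eq_unitSphere_intertwiners (p q : Quaternion ℝ) :
    K p q = {x | ‖x‖ = 1 ∧ x ∈ intertwiners p q} :=
  Set.ext fun _ => and_congr_right star_mul_mul_eq_iff

lemma sub_mul_mul_mem_intertwiners (hp : IsPureUnit p) (hq : IsPureUnit q) (x : Quaternion ℝ) :
    x - p * x * q ∈ intertwiners p q := by
  rw [mem_intertwiners]
  calc p * (x - p * x * q) = p * x - p * p * (x * q) := by noncomm_ring
    _ = x * q - p * x * (q * q) := by
      rw [hp.mul_self_eq_neg_one, hq.mul_self_eq_neg_one]
      noncomm_ring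
    _ = (x - p * x * q) * q := by noncomm_ring

lemma quaternion_im_eq_zero_of_forall_commute (hp : ∀ x, Commute p x) : p.im = 0 := by
  obtain ⟨j, hj_re, hj_imI, hj_imJ, hj_imK⟩ :
      ∃ j : Quaternion ℝ, j.re = 0 ∧ j.imI = 0 ∧ j.imJ = 1 ∧ j.imK = 0 :=
    ⟨⟨0, 0, 1, 0⟩, rfl, rfl, rfl, rfl⟩
  have himJ_imK : p.imK = -p.imK ∧ -p.imJ = p.imJ := by
    simpa [Quaternion.ext_iff] using (hp qi).eq
  have himI : p.imI = -p.imI := by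
    simpa [Quaternion.ext_iff, hj_re, hj_imI, hj_imJ, hj_imK] using
      congrArg (fun x : Quaternion ℝ => x.imK) (hp j).eq
  exact Quaternion.ext _ _ rfl (self_eq_neg.1 himI) (neg_eq_self.1 himJ_imK.2)
    (self_eq_neg.1 himJ_imK.1)

lemma IsPureUnit.exists_not_commute (hp : IsPureUnit p) : ∃ x, ¬Commute p x := by
  by_contra! hcomm
  have hp_zero : p = 0 := by
    rw [← Quaternion.re_add_im p, hp.re_eq_zero, quaternion_im_eq_zero_of_forall_commute hcomm,
      Quaternion.coe_zero, add_zero]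
  simpa [hp_zero] using hp.norm_eq_one

lemma intertwiners_ne_bot (hp : IsPureUnit p) (hq : IsPureUnit q) : intertwiners p q ≠ ⊥ := by
  intro hbot
  have hanti (x : Quaternion ℝ) : p * x = -(x * q) := by
    have hfix : x = p * x * q := by
      simpa only [hbot, Submodule.mem_bot, sub_eq_zero] using sub_mul_mul_mem_intertwiners hp hq x
    calc p * x = -(p * x * (q * q)) := by rw [hq.mul_self_eq_neg_one, mul_neg_one, neg_neg]
      _ = -(x * q) := by rw [← mul_assoc, ← hfix]
  have hpq : q = -p := by simpa using (congrArg Neg.neg (hanti 1)).symm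
  obtain ⟨x, hx⟩ := hp.exists_not_commute
  exact hx (by rw [commute_iff_eq, hanti x, hpq, mul_neg, neg_neg])

lemma starProjection_intertwiners (hp : IsPureUnit p) (hq : IsPureUnit q) (x : Quaternion ℝ) :
    (intertwiners p q).starProjection x = (2⁻¹ : ℝ) • (x - p * x * q) := by
  refine Submodule.eq_starProjection_of_mem_of_inner_eq_zero
    (Submodule.smul_mem _ _ (sub_mul_mul_mem_intertwiners hp hq x)) fun w hw => ?_
  have hw_neg : p * w * q = -w := by
    rw [mem_intertwiners.1 hw, mul_assoc, hq.mul_self_eq_neg_one, mul_neg_one]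
  have hsub : x - (2⁻¹ : ℝ) • (x - p * x * q) = (2⁻¹ : ℝ) • (x + p * x * q) := by module
  rw [hsub, real_inner_smul_left, inner_add_left, hp.inner_mul_mul hq, hw_neg, inner_neg_right,
    add_neg_cancel, mul_zero]

lemma sdist_K (hp : IsPureUnit p) (hq : IsPureUnit q) (x : Quaternion ℝ) :
    sdist x (K p q) = Real.arccos ‖(intertwiners p q).starProjection x‖ := by
  rw [K_eq_unitSphere_intertwiners]
  exact (isLeast_arccos_inner_unitSphere (intertwiners_ne_bot hp hq) x).csInf_eq

theorem mem_CT_iff_inner_eq_zero (hp : IsPureUnit p) (hq : IsPureUnit q) (hx : ‖x‖ = 1) :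
    x ∈ CT p q ↔ ⟪x, p * x * q⟫ = 0 := by
  have norm_proj_mem (U : Submodule ℝ (Quaternion ℝ)) :
      ‖U.starProjection x‖ ∈ Set.Icc (-1) 1 :=
    ⟨by linarith [norm_nonneg (U.starProjection x)], hx ▸ U.norm_starProjection_apply_le x⟩
  calc x ∈ CT p q
    _ ↔ sdist x (K p q) = sdist x (K p (-q)) := and_iff_right hx
    _ ↔ ‖(intertwiners p q).starProjection x‖ = ‖(intertwiners p (-q)).starProjection x‖ := by
      rw [sdist_K hp hq, sdist_K hp hq.neg,
        Real.arccos_injOn.eq_iff (norm_proj_mem _) (norm_proj_mem _)]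
    _ ↔ ‖x - p * x * q‖ = ‖x + p * x * q‖ := by
      rw [starProjection_intertwiners hp hq, starProjection_intertwiners hp hq.neg, mul_neg,
        sub_neg_eq_add, norm_smul, norm_smul, mul_right_inj' (by norm_num)]
    _ ↔ ⟪x, p * x * q⟫ = 0 := by
      rw [eq_comm, InnerProductGeometry.norm_add_eq_norm_sub_iff_angle_eq_pi_div_two,
        InnerProductGeometry.inner_eq_zero_iff_angle_eq_pi_div_two]

lemma K_qi_qi : K qi qi = {x | ‖x‖ = 1 ∧ x.imJ = 0 ∧ x.imK = 0} := by
  rw [K_eq_unitSphere_intertwiners]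
  ext x
  refine and_congr_right fun _ => ?_
  rw [mem_intertwiners, Quaternion.ext_iff]
  simp [neg_eq_self, self_eq_neg, and_comm]

lemma K_qi_neg_qi : K qi (-qi) = {x | ‖x‖ = 1 ∧ x.re = 0 ∧ x.imI = 0} := by
  rw [K_eq_unitSphere_intertwiners]
  ext x
  refine and_congr_right fun _ => ?_
  rw [mem_intertwiners, Quaternion.ext_iff]
  simp [neg_eq_self, self_eq_neg, and_comm]

lemma inner_qi_mul_mul_qi (x : Quaternion ℝ) :
    ⟪x, qi * x * qi⟫ = x.imJ ^ 2 + x.imK ^ 2 - (x.re ^ 2 + x.imI ^ 2) := by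
  have hcoords : (qi * x * qi).re = -x.re ∧ (qi * x * qi).imI = -x.imI ∧
      (qi * x * qi).imJ = x.imJ ∧ (qi * x * qi).imK = x.imK := by simp
  simp only [Quaternion.inner_def, Quaternion.re_mul, Quaternion.re_star, Quaternion.imI_star,
    Quaternion.imJ_star, Quaternion.imK_star, hcoords]
  ring

end Quaternion

theorem statement13 :
    K qi qi = {x : Quaternion ℝ | ‖x‖ = 1 ∧ x.imJ = 0 ∧ x.imK = 0} ∧
    K qi (-qi) = {x : Quaternion ℝ | ‖x‖ = 1 ∧ x.re = 0 ∧ x.imI = 0} ∧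
    ∀ x : Quaternion ℝ, ‖x‖ = 1 →
      ((x ∈ CT qi qi ↔ x.re ^ 2 + x.imI ^ 2 = x.imJ ^ 2 + x.imK ^ 2) ∧
       (x ∈ CT qi qi ↔ x.re ^ 2 + x.imI ^ 2 = 1 / 2)) := by
  refine ⟨K_qi_qi, K_qi_neg_qi, fun x hx => ?_⟩
  have hCT : x ∈ CT qi qi ↔ x.re ^ 2 + x.imI ^ 2 = x.imJ ^ 2 + x.imK ^ 2 := by
    rw [mem_CT_iff_inner_eq_zero isPureUnit_qi isPureUnit_qi hx, inner_qi_mul_mul_qi, sub_eq_zero,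
      eq_comm]
  have hsum : x.re ^ 2 + x.imI ^ 2 + x.imJ ^ 2 + x.imK ^ 2 = 1 := by
    rw [← quaternion_norm_sq, hx, one_pow]
  exact ⟨hCT, hCT.trans ⟨fun h => by linarith, fun h => by linarith⟩⟩
end

section
/- Every isometry of the flat square torus lifts to an isometry of the plane compatible with the lattice: for every bijective isometry F : T → T there exists a bijective isometry F̂ : E → E such that π ∘ F̂ = F ∘ π. Any such F̂ maps the lattice Λ onto a translate of Λ, i.e. F̂(Λ) = F̂(0) + Λ (in particular, the linear part of F̂ maps Λ onto Λ). Moreover, F̂ is unique up to translation by a lattice vector: if F̂₁, F̂₂ are two bijective isometries of E with π ∘ F̂ᵢ = F ∘ π for i = 1, 2, then there is t ∈ Λ with F̂₂ = (translation by t) ∘ F̂₁. -/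
noncomputable section

/-- The lattice `Λ = { (2πm, 2πn) : m, n ∈ ℤ }` in the Euclidean plane. -/
def TorusLattice : AddSubgroup (EuclideanSpace ℝ (Fin 2)) :=
  AddSubgroup.closure
    {EuclideanSpace.single 0 (2 * Real.pi), EuclideanSpace.single 1 (2 * Real.pi)}

/-!
Near every point an isometry of tori lifts to an isometric map between small balls, and by strict
convexity such a map is the restriction of a linear isometry. Along the straight line
`p, p + h, p + 2h, …` the linear isometries found at successive points agree in the direction `h`:
each of them has to send the step `-h` backwards to the point already reached. Hence the linear
isometry found at the origin describes the map everywhere. Two lifts differ by a continuous map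
into the discrete group of periods, which is constant; applied to the lift of `F` composed with a
lift of `F⁻¹`, this also makes the lift of `F` surjective.
-/

open Metric

section LocalIsometry

variable {E E' : Type*} [NormedAddCommGroup E] [NormedSpace ℝ E]
  [NormedAddCommGroup E'] [NormedSpace ℝ E'] [StrictConvexSpace ℝ E'] {f : E → E'} {r : ℝ}

theorem map_smul_of_isometric_on_ball (hr : 0 < r) (hf₀ : f 0 = 0)
    (hf : ∀ x ∈ ball 0 r, ∀ y ∈ ball 0 r, dist (f x) (f y) = dist x y)
    {x : E} (hx : x ∈ ball 0 r) {t : ℝ} (ht₀ : 0 ≤ t) (ht₁ : t ≤ 1) :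
    f (t • x) = t • f x := by
  have h0 : (0 : E) ∈ ball 0 r := mem_ball_self hr
  have htx : t • x ∈ ball 0 r := by
    rw [mem_ball_zero_iff, norm_smul, Real.norm_of_nonneg ht₀]
    exact (mul_le_of_le_one_left (norm_nonneg x) ht₁).trans_lt (mem_ball_zero_iff.1 hx)
  have near : dist (f 0) (f (t • x)) = t * dist (f 0) (f x) := by
    rw [hf _ h0 _ htx, hf _ h0 _ hx, dist_zero_left, dist_zero_left, norm_smul,
      Real.norm_of_nonneg ht₀]
  have far : dist (f (t • x)) (f x) = (1 - t) * dist (f 0) (f x) := by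
    rw [hf _ htx _ hx, hf _ h0 _ hx, dist_zero_left, dist_comm, dist_eq_norm,
      show x - t • x = (1 - t) • x by module, norm_smul, Real.norm_of_nonneg (by linarith)]
  simpa [hf₀, AffineMap.lineMap_apply] using eq_lineMap_of_dist_eq_mul_of_dist_eq_mul near far

theorem exists_linearIsometry_eqOn_ball (hr : 0 < r) (hf₀ : f 0 = 0)
    (hf : ∀ x ∈ ball 0 r, ∀ y ∈ ball 0 r, dist (f x) (f y) = dist x y) :
    ∃ L : E →ₗᵢ[ℝ] E', Set.EqOn L f (ball 0 r) := by
  let c (x : E) : ℝ := r / (r + ‖x‖)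
  have c_pos (x : E) : 0 < c x := by positivity
  have c_le_one (x : E) : c x ≤ 1 := div_le_one_of_le₀ (by simp) (by positivity)
  have smul_mem {x : E} {s : ℝ} (hs : 0 < s) (hsc : s ≤ c x) : s • x ∈ ball 0 r := by
    rw [mem_ball_zero_iff, norm_smul, Real.norm_of_nonneg hs.le]
    calc s * ‖x‖ ≤ c x * ‖x‖ := by gcongr
      _ < c x * (r + ‖x‖) := by gcongr; linarith
      _ = r := div_mul_cancel₀ r (by positivity)
  let g (x : E) : E' := (c x)⁻¹ • f (c x • x)
  have g_eq {x : E} {s : ℝ} (hs : 0 < s) (hsc : s ≤ c x) : g x = s⁻¹ • f (s • x) := by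
    have hmap : f ((s / c x) • c x • x) = (s / c x) • f (c x • x) :=
      map_smul_of_isometric_on_ball hr hf₀ hf (smul_mem (c_pos x) le_rfl)
        (div_nonneg hs.le (c_pos x).le) (div_le_one_of_le₀ hsc (c_pos x).le)
    rw [smul_smul, div_mul_cancel₀ s (c_pos x).ne'] at hmap
    rw [hmap, smul_smul, ← mul_div_assoc, inv_mul_cancel₀ hs.ne', one_div]
  have hg : Isometry g := by
    refine Isometry.of_dist_eq fun x y => ?_
    let s := min (c x) (c y)
    have hs : 0 < s := lt_min (c_pos x) (c_pos y)
    have hsx : s ≤ c x := min_le_left _ _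
    have hsy : s ≤ c y := min_le_right _ _
    rw [g_eq hs hsx, g_eq hs hsy, dist_smul₀, hf _ (smul_mem hs hsx) _ (smul_mem hs hsy),
      dist_smul₀, norm_inv, inv_mul_cancel_left₀ (norm_ne_zero_iff.2 hs.ne')]
  have hg₀ : g 0 = 0 := by simp [g, hf₀]
  refine ⟨hg.affineIsometryOfStrictConvexSpace.linearIsometry, fun x hx => ?_⟩
  have hgx : g x = f x := by
    rw [inv_smul_eq_iff₀ (c_pos x).ne']
    exact map_smul_of_isometric_on_ball hr hf₀ hf hx (c_pos x).le (c_le_one x)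
  have hlin := hg.affineIsometryOfStrictConvexSpace.map_vadd 0 x
  simpa [hg₀, hgx] using hlin.symm

end LocalIsometry

section Quotient

variable {E : Type*} [NormedAddCommGroup E] {Λ : AddSubgroup E} {r s : ℝ}

/-- The quotient map `E → E ⧸ Λ` preserves norms, hence distances, smaller than `r`. For discrete
`Λ ≠ 0` the best such `r` is half the infimum of the lengths of nonzero vectors of `Λ`. -/
def IsometricBelow (Λ : AddSubgroup E) (r : ℝ) : Prop :=
  ∀ x : E, ‖x‖ < r → ‖(x : E ⧸ Λ)‖ = ‖x‖

theorem exists_isometricBelow (Λ : AddSubgroup E) [DiscreteTopology Λ] :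
    ∃ r > 0, IsometricBelow Λ r := by
  obtain ⟨ε, ε_pos, hε⟩ := exists_ball_inter_eq_singleton_of_mem_discrete
    (SetLike.isDiscrete_iff_discreteTopology.2 ‹DiscreteTopology Λ›) Λ.zero_mem
  refine ⟨ε / 2, half_pos ε_pos, fun x hx => QuotientAddGroup.norm_mk_le_norm.antisymm ?_⟩
  refine QuotientAddGroup.le_norm_iff.2 fun y hyx => ?_
  by_contra! hlt
  have hmem : y - x ∈ Λ := QuotientAddGroup.eq_iff_sub_mem.1 hyx
  have hsmall : y - x ∈ ball 0 ε := by
    rw [mem_ball_zero_iff]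
    linarith [norm_sub_le y x]
  have hzero : y - x ∈ ({0} : Set E) := hε ▸ ⟨hsmall, hmem⟩
  exact hlt.ne (congrArg norm (sub_eq_zero.1 hzero))

namespace IsometricBelow

theorem mono (h : IsometricBelow Λ r) (hsr : s ≤ r) : IsometricBelow Λ s :=
  fun x hx => h x (hx.trans_le hsr)

theorem dist_mk (h : IsometricBelow Λ r) {x y : E} (hxy : dist x y < r) :
    dist (x : E ⧸ Λ) (y : E ⧸ Λ) = dist x y := by
  rw [dist_eq_norm] at hxy
  rw [dist_eq_norm, dist_eq_norm, ← QuotientAddGroup.mk_sub, h _ hxy]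

theorem eq_of_mk_eq (h : IsometricBelow Λ r) {x y : E} (hxy : dist x y < r)
    (hmk : (x : E ⧸ Λ) = y) : x = y := by
  rw [← dist_eq_zero, ← h.dist_mk hxy, hmk, dist_self]

end IsometricBelow

theorem exists_mk_add_eq_of_dist_lt {a : E ⧸ Λ} {q : E} (h : dist a q < r) :
    ∃ k : E, ‖k‖ < r ∧ ((q + k : E) : E ⧸ Λ) = a := by
  rw [dist_eq_norm] at h
  obtain ⟨k, hk, hkr⟩ := QuotientAddGroup.norm_lt_iff.1 h
  exact ⟨k, hkr, by rw [QuotientAddGroup.mk_add, hk, add_sub_cancel]⟩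

end Quotient

section Lift

variable {E E' : Type*} [NormedAddCommGroup E] [NormedSpace ℝ E]
  [NormedAddCommGroup E'] [NormedSpace ℝ E'] [StrictConvexSpace ℝ E']
  {Λ : AddSubgroup E} {Λ' : AddSubgroup E'} {F : E ⧸ Λ → E' ⧸ Λ'} {r : ℝ}

theorem exists_linearIsometry_lift_ball (hF : Isometry F) (hr : 0 < r)
    (hΛ : IsometricBelow Λ (2 * r)) (hΛ' : IsometricBelow Λ' (2 * r))
    {p : E} {q : E'} (hpq : (q : E' ⧸ Λ') = F p) :
    ∃ L : E →ₗᵢ[ℝ] E', ∀ h ∈ ball 0 r, ((q + L h : E') : E' ⧸ Λ') = F (p + h : E) := by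
  have lift_step (h : E) (hh : h ∈ ball 0 r) :
      ∃ k : E', ‖k‖ < r ∧ ((q + k : E') : E' ⧸ Λ') = F (p + h : E) := by
    rw [mem_ball_zero_iff] at hh
    apply exists_mk_add_eq_of_dist_lt
    rw [hpq, hF.dist_eq, hΛ.dist_mk] <;> rw [dist_self_add_left] <;> linarith
  choose! f f_lt hf using lift_step
  have f_isometric : ∀ x ∈ ball 0 r, ∀ y ∈ ball 0 r, dist (f x) (f y) = dist x y := by
    intro x hx y hy
    have hxy : dist x y < 2 * r := by
      linarith [dist_le_norm_add_norm x y, mem_ball_zero_iff.1 hx, mem_ball_zero_iff.1 hy]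
    have hfxy : dist (f x) (f y) < 2 * r := by
      linarith [dist_le_norm_add_norm (f x) (f y), f_lt x hx, f_lt y hy]
    rw [← dist_add_left q] at hfxy ⊢
    rw [← dist_add_left p x y] at hxy ⊢
    rw [← hΛ'.dist_mk hfxy, hf x hx, hf y hy, hF.dist_eq, hΛ.dist_mk hxy]
  have h0 : (0 : E) ∈ ball 0 r := mem_ball_self hr
  have hf₀ : f 0 = 0 := by
    have hlt : dist (q + f 0) q < 2 * r := by
      rw [dist_self_add_left]
      linarith [f_lt 0 h0]
    exact add_eq_left.1 (hΛ'.eq_of_mk_eq hlt (by rw [hf 0 h0, add_zero, hpq]))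
  obtain ⟨L, hL⟩ := exists_linearIsometry_eqOn_ball hr hf₀ f_isometric
  exact ⟨L, fun h hh => by rw [hL hh, hf h hh]⟩

theorem mk_add_add_eq_of_isometry (hF : Isometry F)
    (hΛ : IsometricBelow Λ (2 * r)) (hΛ' : IsometricBelow Λ' (2 * r))
    {p h : E} {q k : E'} (hh : ‖h‖ < r) (hk : ‖k‖ < r) (hpq : (q : E' ⧸ Λ') = F p)
    (hstep : ((q + k : E') : E' ⧸ Λ') = F (p + h : E)) :
    ((q + k + k : E') : E' ⧸ Λ') = F (p + h + h : E) := by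
  obtain ⟨L, hL⟩ := exists_linearIsometry_lift_ball hF ((norm_nonneg h).trans_lt hh) hΛ hΛ' hstep
  have hback : ((q + k + L (-h) : E') : E' ⧸ Λ') = q := by
    rw [hL (-h) (by simpa using hh), add_neg_cancel_right, hpq]
  have hclose : dist (q + k + L (-h)) q < 2 * r := by
    rw [add_assoc, dist_self_add_left]
    have hLh : ‖L (-h)‖ = ‖h‖ := by rw [L.norm_map, norm_neg]
    linarith [norm_add_le k (L (-h))]
  have hLk : L h = k := by
    have hcancel := hΛ'.eq_of_mk_eq hclose hback
    rw [map_neg, add_assoc, add_eq_left, add_neg_eq_zero] at hcancel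
    exact hcancel.symm
  rw [← hL h (by simpa using hh), hLk]

theorem mk_add_nsmul_eq_of_isometry (hF : Isometry F)
    (hΛ : IsometricBelow Λ (2 * r)) (hΛ' : IsometricBelow Λ' (2 * r))
    {p h : E} {q k : E'} (hh : ‖h‖ < r) (hk : ‖k‖ < r) (hpq : (q : E' ⧸ Λ') = F p)
    (hstep : ((q + k : E') : E' ⧸ Λ') = F (p + h : E)) (n : ℕ) :
    ((q + n • k : E') : E' ⧸ Λ') = F (p + n • h : E) := by
  induction n generalizing p q with
  | zero => simpa using hpq
  | succ n ih =>
    rw [succ_nsmul', succ_nsmul', ← add_assoc, ← add_assoc]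
    exact ih hstep (mk_add_add_eq_of_isometry hF hΛ hΛ' hh hk hpq hstep)

theorem exists_isometry_lift [DiscreteTopology Λ] [DiscreteTopology Λ'] (hF : Isometry F) :
    ∃ f : E → E', Isometry f ∧ ∀ x, (f x : E' ⧸ Λ') = F x := by
  obtain ⟨s, s_pos, hs⟩ := exists_isometricBelow Λ
  obtain ⟨s', s'_pos, hs'⟩ := exists_isometricBelow Λ'
  let r := min s s' / 2
  have hr : 0 < r := half_pos (lt_min s_pos s'_pos)
  have two_mul_r : 2 * r = min s s' := mul_div_cancel₀ _ two_ne_zero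
  have hΛ : IsometricBelow Λ (2 * r) := hs.mono (two_mul_r ▸ min_le_left s s')
  have hΛ' : IsometricBelow Λ' (2 * r) := hs'.mono (two_mul_r ▸ min_le_right s s')
  obtain ⟨q, hq⟩ := QuotientAddGroup.mk_surjective (F (0 : E))
  obtain ⟨L, hL⟩ := exists_linearIsometry_lift_ball hF hr hΛ hΛ' hq
  refine ⟨fun x => q + L x, (isometry_add_left q).comp L.isometry, fun x => ?_⟩
  obtain ⟨n, hn⟩ := exists_nat_gt (‖x‖ / r)
  have n_pos : (0 : ℝ) < n := (div_nonneg (norm_nonneg x) hr.le).trans_lt hn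
  obtain ⟨h, rfl⟩ : ∃ h : E, n • h = x :=
    ⟨(n : ℝ)⁻¹ • x, by rw [← Nat.cast_smul_eq_nsmul ℝ, smul_inv_smul₀ n_pos.ne']⟩
  have hh : ‖h‖ < r := by
    rw [div_lt_iff₀ hr, ← Nat.cast_smul_eq_nsmul ℝ, norm_smul, RCLike.norm_natCast] at hn
    exact lt_of_mul_lt_mul_left hn n_pos.le
  have hline := mk_add_nsmul_eq_of_isometry hF hΛ hΛ' hh (by rwa [L.norm_map]) hq
    (hL h (mem_ball_zero_iff.2 hh)) n
  rwa [zero_add, ← map_nsmul] at hline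

end Lift

theorem exists_eq_add_of_mk_comp_eq {X G : Type*} [TopologicalSpace X] [ConnectedSpace X]
    [AddCommGroup G] [TopologicalSpace G] [IsTopologicalAddGroup G]
    {Λ : AddSubgroup G} [DiscreteTopology Λ] {f₁ f₂ : X → G}
    (hf₁ : Continuous f₁) (hf₂ : Continuous f₂) (h : ∀ x, (f₁ x : G ⧸ Λ) = f₂ x) :
    ∃ t ∈ Λ, f₂ = fun x => t + f₁ x := by
  have hmem (x : X) : f₂ x - f₁ x ∈ Λ := QuotientAddGroup.eq_iff_sub_mem.1 (h x).symm
  have hcont : Continuous fun x => (⟨f₂ x - f₁ x, hmem x⟩ : Λ) := (hf₂.sub hf₁).subtype_mk hmem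
  obtain ⟨x₀⟩ := ‹ConnectedSpace X›.toNonempty
  refine ⟨f₂ x₀ - f₁ x₀, hmem x₀, funext fun x => ?_⟩
  have hconst : f₂ x - f₁ x = f₂ x₀ - f₁ x₀ :=
    congrArg Subtype.val (PreconnectedSpace.constant inferInstance hcont)
  rw [← hconst, sub_add_cancel]

theorem image_eq_image_add_of_mk_comp_eq {G G' : Type*} [AddCommGroup G] [AddCommGroup G']
    {Λ : AddSubgroup G} {Λ' : AddSubgroup G'} {F : G ⧸ Λ → G' ⧸ Λ'} (hF : Function.Injective F)
    {f : G → G'} (hf : Function.Surjective f) (hfF : ∀ x, (f x : G' ⧸ Λ') = F x) :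
    f '' Λ = (fun t => f 0 + t) '' Λ' := by
  have mem_iff (x : G) : f x - f 0 ∈ Λ' ↔ x ∈ Λ := by
    rw [← QuotientAddGroup.eq_iff_sub_mem, hfF, hfF, hF.eq_iff, QuotientAddGroup.eq_iff_sub_mem,
      sub_zero]
  ext z
  obtain ⟨x, rfl⟩ := hf z
  constructor
  · rintro ⟨y, hy, hyx⟩
    exact ⟨f x - f 0, hyx ▸ (mem_iff y).2 hy, add_sub_cancel _ _⟩
  · rintro ⟨t, ht, hx : f 0 + t = f x⟩
    exact ⟨x, (mem_iff x).1 (by rwa [← hx, add_sub_cancel_left]), rfl⟩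

theorem exists_bijective_isometry_lift {E E' : Type*}
    [NormedAddCommGroup E] [NormedSpace ℝ E] [StrictConvexSpace ℝ E]
    [NormedAddCommGroup E'] [NormedSpace ℝ E'] [StrictConvexSpace ℝ E']
    {Λ : AddSubgroup E} {Λ' : AddSubgroup E'} [DiscreteTopology Λ] [DiscreteTopology Λ']
    {F : E ⧸ Λ → E' ⧸ Λ'} (hF : Isometry F) (hFs : Function.Surjective F) :
    ∃ f : E → E', Function.Bijective f ∧ Isometry f ∧ ∀ x, (f x : E' ⧸ Λ') = F x := by
  obtain ⟨f, hf, hfF⟩ := exists_isometry_lift hF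
  obtain ⟨G, hG⟩ := hFs.hasRightInverse
  obtain ⟨g, hg, hgG⟩ := exists_isometry_lift (hF.right_inv hG)
  obtain ⟨t, -, ht⟩ : ∃ t ∈ Λ', id = fun y => t + f (g y) :=
    exists_eq_add_of_mk_comp_eq (hf.comp hg).continuous continuous_id fun y =>
      (hfF (g y)).trans (by rw [hgG, hG, id])
  have hf_surj : Function.Surjective f := fun y =>
    ⟨g (t + y), add_left_cancel (congrFun ht (t + y)).symm⟩
  exact ⟨f, ⟨hf.injective, hf_surj⟩, hf, hfF⟩

theorem statement16_general {E E' : Type*}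
    [NormedAddCommGroup E] [NormedSpace ℝ E] [StrictConvexSpace ℝ E]
    [NormedAddCommGroup E'] [NormedSpace ℝ E'] [StrictConvexSpace ℝ E']
    {Λ : AddSubgroup E} {Λ' : AddSubgroup E'} [DiscreteTopology Λ] [DiscreteTopology Λ']
    {F : E ⧸ Λ → E' ⧸ Λ'} (hFs : Function.Surjective F) (hF : Isometry F) :
    (∃ f : E → E', Function.Bijective f ∧ Isometry f ∧ ∀ x, (f x : E' ⧸ Λ') = F x) ∧
    (∀ f : E → E', Function.Surjective f → (∀ x, (f x : E' ⧸ Λ') = F x) →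
      f '' Λ = (fun t => f 0 + t) '' Λ') ∧
    (∀ f₁ f₂ : E → E', Continuous f₁ → (∀ x, (f₁ x : E' ⧸ Λ') = F x) →
      Continuous f₂ → (∀ x, (f₂ x : E' ⧸ Λ') = F x) → ∃ t ∈ Λ', f₂ = fun x => t + f₁ x) := by
  have hΛ : IsClosed (Λ : Set E) := AddSubgroup.isClosed_of_discrete
  have hFi : Function.Injective F := hF.injective
  exact ⟨exists_bijective_isometry_lift hF hFs,
    fun f hf hfF => image_eq_image_add_of_mk_comp_eq hFi hf hfF,
    fun f₁ f₂ hf₁ h₁ hf₂ h₂ =>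
      exists_eq_add_of_mk_comp_eq hf₁ hf₂ fun x => (h₁ x).trans (h₂ x).symm⟩

theorem discreteTopology_torusLattice : DiscreteTopology TorusLattice := by
  let b : Module.Basis (Fin 2) ℝ (EuclideanSpace ℝ (Fin 2)) :=
    (EuclideanSpace.basisFun (Fin 2) ℝ).toBasis.isUnitSMul fun _ => Real.two_pi_pos.ne'.isUnit
  have hb (i : Fin 2) : b i = EuclideanSpace.single i (2 * Real.pi) := by
    ext j
    simp [b, Module.Basis.isUnitSMul_apply]
  have hΛ : TorusLattice = (Submodule.span ℤ (Set.range b)).toAddSubgroup := by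
    have hrange : Set.range b = {b 0, b 1} := by ext; simp [eq_comm]
    rw [Submodule.span_int_eq_addSubgroupClosure, hrange, hb, hb, TorusLattice]
  rw [hΛ]
  infer_instance

/-- Every bijective isometry of the flat square torus `E ⧸ Λ` lifts to a bijective
isometry of the plane commuting with the projection; any such lift maps `Λ` onto a
translate of `Λ`, and the lift is unique up to translation by a lattice vector. -/
theorem statement16 (F : EuclideanSpace ℝ (Fin 2) ⧸ TorusLattice → EuclideanSpace ℝ (Fin 2) ⧸ TorusLattice)
    (hFb : Function.Bijective F) (hFi : Isometry F) :
    (∃ Fh : EuclideanSpace ℝ (Fin 2) → EuclideanSpace ℝ (Fin 2),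
      Function.Bijective Fh ∧ Isometry Fh ∧
      ∀ x, QuotientAddGroup.mk' TorusLattice (Fh x) = F (QuotientAddGroup.mk' TorusLattice x)) ∧
    (∀ Fh : EuclideanSpace ℝ (Fin 2) → EuclideanSpace ℝ (Fin 2),
      Function.Bijective Fh → Isometry Fh →
      (∀ x, QuotientAddGroup.mk' TorusLattice (Fh x) = F (QuotientAddGroup.mk' TorusLattice x)) →
      Fh '' (TorusLattice : Set (EuclideanSpace ℝ (Fin 2)))
        = (fun t => Fh 0 + t) '' (TorusLattice : Set (EuclideanSpace ℝ (Fin 2)))) ∧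
    (∀ F₁ F₂ : EuclideanSpace ℝ (Fin 2) → EuclideanSpace ℝ (Fin 2),
      Function.Bijective F₁ → Isometry F₁ →
      (∀ x, QuotientAddGroup.mk' TorusLattice (F₁ x) = F (QuotientAddGroup.mk' TorusLattice x)) →
      Function.Bijective F₂ → Isometry F₂ →
      (∀ x, QuotientAddGroup.mk' TorusLattice (F₂ x) = F (QuotientAddGroup.mk' TorusLattice x)) →
      ∃ t ∈ TorusLattice, F₂ = fun x => t + F₁ x) := by
  have := discreteTopology_torusLattice
  obtain ⟨lift, image_eq, unique⟩ := statement16_general hFb.surjective hFi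
  exact ⟨lift, fun Fh hb _ => image_eq Fh hb.surjective,
    fun F₁ F₂ _ i₁ h₁ _ i₂ => unique F₁ F₂ i₁.continuous h₁ i₂.continuous⟩
end
end

section
/- A two-dimensional lattice with an axis of symmetry is rectangular or rhombic: let L be an additive subgroup of the Euclidean plane ℝ² that is discrete (there is ε > 0 with L ∩ {v : ‖v‖ < ε} = {0}) and contains two ℝ-linearly independent vectors, and suppose the reflection R(x, y) := (−x, y) maps L onto L. Then there exist a > 0 and b > 0 such that either L = { (m·a, n·b) : m, n ∈ ℤ } (a rectangular lattice aligned with the axis), or L = { m·(a, b) + n·(a, −b) : m, n ∈ ℤ } (a rhombic lattice, which is the rectangular lattice with spacings 2a, 2b together with the midpoints of its rectangles). -/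
noncomputable section

/-- The vector `(a, b)` in the Euclidean plane. -/
def vec2 (a b : ℝ) : EuclideanSpace ℝ (Fin 2) :=
  EuclideanSpace.single 0 a + EuclideanSpace.single 1 b

/-- The reflection `(x, y) ↦ (−x, y)` of the Euclidean plane. -/
def reflY (v : EuclideanSpace ℝ (Fin 2)) : EuclideanSpace ℝ (Fin 2) :=
  vec2 (-(v 0)) (v 1)

/-!
For an involution `σ` preserving `L`, every `x ∈ L` yields a fixed vector `x + σ x` and a negated
vector `x - σ x` of `L`. By discreteness the fixed and the negated vectors of `L` are the multiples
of some `e` and some `f`, so `x + σ x = m • e` and `x - σ x = n • f`. If `m` or `n` is even, then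
subtracting half of that multiple from `x` leaves a multiple of the other generator, so
`x ∈ ℤe + ℤf`. If both are odd, then translating `x` by `ℤe + ℤf` gives `t ∈ L` with `t + σ t = e`
and `t - σ t = f`, and such a `t` generates `L` together with `σ t`.
-/

open AddSubgroup hiding closure
open Set

section Involution

variable {V : Type*} [AddCommGroup V] {σ : V →+ V} {L : AddSubgroup V} {e f t x : V}

/-- The elements of `L` fixed by the endomorphism `σ`. The elements of `L` negated by `σ` form
`fixedPart (-σ) L`, so that statements about fixed elements apply to negated ones as well. -/
def fixedPart (σ : V →+ V) (L : AddSubgroup V) : AddSubgroup V :=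
  L ⊓ σ.eqLocus (AddMonoidHom.id V)

theorem mem_fixedPart : x ∈ fixedPart σ L ↔ x ∈ L ∧ σ x = x := Iff.rfl

theorem mem_fixedPart_neg : x ∈ fixedPart (-σ) L ↔ x ∈ L ∧ σ x = -x := by
  rw [mem_fixedPart, AddMonoidHom.neg_apply, neg_eq_iff_eq_neg]

theorem involutive_neg_addMonoidHom (hσ : Function.Involutive σ) :
    Function.Involutive (-σ) := fun x ↦ by
  simp only [AddMonoidHom.neg_apply, map_neg, neg_neg, hσ x]

theorem mapsTo_neg_addMonoidHom (hL : MapsTo σ L L) : MapsTo (-σ) L L :=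
  fun _ hx ↦ L.neg_mem (hL hx)

theorem add_apply_mem_fixedPart (hσ : Function.Involutive σ) (hL : MapsTo σ L L) (hx : x ∈ L) :
    x + σ x ∈ fixedPart σ L :=
  mem_fixedPart.2 ⟨L.add_mem hx (hL hx), by rw [map_add, hσ x, add_comm]⟩

theorem sub_apply_mem_fixedPart_neg (hσ : Function.Involutive σ) (hL : MapsTo σ L L)
    (hx : x ∈ L) : x - σ x ∈ fixedPart (-σ) L := by
  simpa only [AddMonoidHom.neg_apply, ← sub_eq_add_neg] using
    add_apply_mem_fixedPart (involutive_neg_addMonoidHom hσ) (mapsTo_neg_addMonoidHom hL) hx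

theorem apply_eq_neg_of_fixedPart_eq_bot (hσ : Function.Involutive σ) (hL : MapsTo σ L L)
    (h : fixedPart σ L = ⊥) (hx : x ∈ L) : σ x = -x := by
  have hsum := add_apply_mem_fixedPart hσ hL hx
  rw [h, mem_bot] at hsum
  exact eq_neg_of_add_eq_zero_right hsum

theorem mem_closure_pair_of_even_add_apply (he : e ∈ fixedPart σ L)
    (hf : fixedPart (-σ) L = zmultiples f) (hx : x ∈ L) {m : ℤ} (hm : Even m)
    (h : x + σ x = m • e) : x ∈ AddSubgroup.closure {e, f} := by
  obtain ⟨p, rfl⟩ := hm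
  have hneg : x - p • e ∈ fixedPart (-σ) L := by
    refine mem_fixedPart_neg.2 ⟨L.sub_mem hx (L.zsmul_mem he.1 p), ?_⟩
    rw [map_sub, map_zsmul, he.2, eq_sub_of_add_eq' h, AddMonoidHom.id_apply, add_zsmul]
    abel
  obtain ⟨q, hq⟩ := mem_zmultiples_iff.1 (hf ▸ hneg)
  exact mem_closure_pair.2 ⟨p, q, by rw [hq, add_sub_cancel]⟩

theorem mem_closure_pair_of_even_sub_apply (he : fixedPart σ L = zmultiples e)
    (hf : f ∈ fixedPart (-σ) L) (hx : x ∈ L) {n : ℤ} (hn : Even n)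
    (h : x - σ x = n • f) : x ∈ AddSubgroup.closure {e, f} := by
  rw [Set.pair_comm]
  refine mem_closure_pair_of_even_add_apply hf (by rwa [neg_neg]) hx hn ?_
  rwa [AddMonoidHom.neg_apply, ← sub_eq_add_neg]

theorem exists_add_apply_eq_and_sub_apply_eq (hσ : Function.Involutive σ) (hL : MapsTo σ L L)
    (he : fixedPart σ L = zmultiples e) (hf : fixedPart (-σ) L = zmultiples f)
    (hx : x ∈ L) (hxef : x ∉ AddSubgroup.closure {e, f}) :
    ∃ t ∈ L, t + σ t = e ∧ t - σ t = f := by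
  have he_mem : e ∈ fixedPart σ L := he ▸ mem_zmultiples e
  have hf_mem : f ∈ fixedPart (-σ) L := hf ▸ mem_zmultiples f
  obtain ⟨m, hm⟩ := mem_zmultiples_iff.1 (he ▸ add_apply_mem_fixedPart hσ hL hx)
  obtain ⟨n, hn⟩ := mem_zmultiples_iff.1 (hf ▸ sub_apply_mem_fixedPart_neg hσ hL hx)
  have hm_odd : Odd m := Int.not_even_iff_odd.1 fun hm_even ↦
    hxef (mem_closure_pair_of_even_add_apply he_mem hf hx hm_even hm.symm)
  have hn_odd : Odd n := Int.not_even_iff_odd.1 fun hn_even ↦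
    hxef (mem_closure_pair_of_even_sub_apply he hf_mem hx hn_even hn.symm)
  obtain ⟨p, rfl⟩ := hm_odd
  obtain ⟨q, rfl⟩ := hn_odd
  have hσe : σ e = e := (mem_fixedPart.1 he_mem).2
  have hσf : σ f = -f := (mem_fixedPart_neg.1 hf_mem).2
  have hσt : σ (x - p • e - q • f) = σ x - p • e + q • f := by
    rw [map_sub, map_sub, map_zsmul, map_zsmul, hσe, hσf, smul_neg, sub_neg_eq_add]
  refine ⟨x - p • e - q • f,
    L.sub_mem (L.sub_mem hx (L.zsmul_mem he_mem.1 p)) (L.zsmul_mem hf_mem.1 q), ?_, ?_⟩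
  · calc x - p • e - q • f + σ (x - p • e - q • f)
      _ = x + σ x - (2 * p) • e := by rw [hσt]; module
      _ = e := by rw [← hm]; module
  · calc x - p • e - q • f - σ (x - p • e - q • f)
      _ = x - σ x - (2 * q) • f := by rw [hσt]; module
      _ = f := by rw [← hn]; module

theorem eq_closure_pair_apply (hσ : Function.Involutive σ) (hL : MapsTo σ L L) (ht : t ∈ L)
    (he : fixedPart σ L = zmultiples (t + σ t)) (hf : fixedPart (-σ) L = zmultiples (t - σ t)) :
    L = AddSubgroup.closure {t, σ t} := by
  refine le_antisymm (fun x hx ↦ ?_) ((closure_le L).2 (pair_subset ht (hL ht)))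
  obtain ⟨n, hn⟩ := mem_zmultiples_iff.1 (hf ▸ sub_apply_mem_fixedPart_neg hσ hL hx)
  have hfix : x - n • t ∈ fixedPart σ L := by
    refine mem_fixedPart.2 ⟨L.sub_mem hx (L.zsmul_mem ht n), ?_⟩
    rw [map_sub, map_zsmul, ← sub_eq_zero]
    calc σ x - n • σ t - (x - n • t)
      _ = n • (t - σ t) - (x - σ x) := by module
      _ = 0 := by rw [hn, sub_self]
  obtain ⟨k, hk⟩ := mem_zmultiples_iff.1 (he ▸ hfix)
  refine mem_closure_pair.2 ⟨n + k, k, ?_⟩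
  calc (n + k) • t + k • σ t
    _ = n • t + k • (t + σ t) := by module
    _ = x := by rw [hk, add_sub_cancel]

theorem eq_closure_pair_or_exists_eq_closure_pair_apply (hσ : Function.Involutive σ)
    (hL : MapsTo σ L L) (he : fixedPart σ L = zmultiples e)
    (hf : fixedPart (-σ) L = zmultiples f) :
    L = AddSubgroup.closure {e, f} ∨
      ∃ t, t + σ t = e ∧ t - σ t = f ∧ L = AddSubgroup.closure {t, σ t} := by
  by_cases hle : L ≤ AddSubgroup.closure {e, f}
  · have he_mem : e ∈ fixedPart σ L := he ▸ mem_zmultiples e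
    have hf_mem : f ∈ fixedPart (-σ) L := hf ▸ mem_zmultiples f
    exact .inl (hle.antisymm ((closure_le L).2 (pair_subset he_mem.1 hf_mem.1)))
  · obtain ⟨x, hx, hxef⟩ := SetLike.not_le_iff_exists.1 hle
    obtain ⟨t, ht, rfl, rfl⟩ := exists_add_apply_eq_and_sub_apply_eq hσ hL he hf hx hxef
    exact .inr ⟨t, rfl, rfl, eq_closure_pair_apply hσ hL ht he hf⟩

end Involution

theorem notMem_span_singleton_of_linearIndependent_pair {R M : Type*} [CommRing R] [Nontrivial R]
    [AddCommGroup M] [Module R M] {x y z : M} (h : LinearIndependent R ![x, y])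
    (hx : x ∈ Submodule.span R {z}) : y ∉ Submodule.span R {z} := by
  intro hy
  obtain ⟨r, rfl⟩ := Submodule.mem_span_singleton.1 hx
  obtain ⟨s, rfl⟩ := Submodule.mem_span_singleton.1 hy
  obtain ⟨-, hr⟩ := LinearIndependent.pair_iff.1 h s (-r) (by module)
  exact h.ne_zero 0 (by simp [neg_eq_zero.1 hr])

section DiscreteSubgroup

variable {E : Type*} [AddCommGroup E] [Module ℝ E] [TopologicalSpace E] [ContinuousSMul ℝ E]
  {L : AddSubgroup E} {σ : E →+ E} {v w : E}

theorem exists_pos_inf_span_singleton_eq_zmultiples [DiscreteTopology L]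
    (h : L ⊓ (Submodule.span ℝ {v}).toAddSubgroup ≠ ⊥) :
    ∃ a > (0 : ℝ), L ⊓ (Submodule.span ℝ {v}).toAddSubgroup = zmultiples (a • v) := by
  have hv : v ≠ 0 := by
    rintro rfl
    simp at h
  let φ : ℝ →+ E := (LinearMap.toSpanSingleton ℝ E v).toAddMonoidHom
  have hφ_range : φ.range = (Submodule.span ℝ {v}).toAddSubgroup := by
    ext x
    simp [φ, Submodule.mem_span_singleton]
  have : DiscreteTopology (L.comap φ) :=
    DiscreteTopology.preimage_of_continuous_injective (L : Set E)
      (continuous_id.smul continuous_const) (smul_left_injective ℝ hv)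
  obtain ⟨c, hc⟩ :=
    (AddSubgroup.isAddCyclic_iff_exists_zmultiples_eq_top _).1 (discrete_iff_addCyclic.2 this)
  have hL : L ⊓ (Submodule.span ℝ {v}).toAddSubgroup = zmultiples (|c| • v) :=
    calc L ⊓ (Submodule.span ℝ {v}).toAddSubgroup
      _ = (L.comap φ).map φ := by rw [map_comap_eq, hφ_range, inf_comm]
      _ = (zmultiples |c|).map φ := by rw [zmultiples_abs, hc]
      _ = zmultiples (|c| • v) := φ.map_zmultiples |c|
  refine ⟨|c|, abs_pos.2 ?_, hL⟩
  rintro rfl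
  simp [hL] at h

theorem exists_pos_fixedPart_eq_zmultiples [DiscreteTopology L] (hσ : Function.Involutive σ)
    (hL : MapsTo σ L L) (hv : ∀ x, σ x = x ↔ x ∈ Submodule.span ℝ {v})
    (hw : ∀ x, σ x = -x → x ∈ Submodule.span ℝ {w})
    (hfull : ∃ x y, x ∈ L ∧ y ∈ L ∧ LinearIndependent ℝ ![x, y]) :
    ∃ a > (0 : ℝ), fixedPart σ L = zmultiples (a • v) := by
  have hfixed : fixedPart σ L = L ⊓ (Submodule.span ℝ {v}).toAddSubgroup :=
    AddSubgroup.ext fun x ↦ and_congr_right fun _ ↦ hv x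
  have hne : fixedPart σ L ≠ ⊥ := by
    intro hbot
    have hspan : ∀ x ∈ L, x ∈ Submodule.span ℝ {w} := fun x hx ↦
      hw x (apply_eq_neg_of_fixedPart_eq_bot hσ hL hbot hx)
    obtain ⟨x, y, hx, hy, hxy⟩ := hfull
    exact notMem_span_singleton_of_linearIndependent_pair hxy (hspan x hx) (hspan y hy)
  rw [hfixed] at hne ⊢
  exact exists_pos_inf_span_singleton_eq_zmultiples hne

theorem statement17_general [DiscreteTopology L] (hσ : Function.Involutive σ)
    (hL : MapsTo σ L L) (hv : ∀ x, σ x = -x ↔ x ∈ Submodule.span ℝ {v})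
    (hw : ∀ x, σ x = x ↔ x ∈ Submodule.span ℝ {w})
    (hfull : ∃ x y, x ∈ L ∧ y ∈ L ∧ LinearIndependent ℝ ![x, y]) :
    ∃ a > (0 : ℝ), ∃ b > (0 : ℝ), L = AddSubgroup.closure {a • v, b • w} ∨
      L = AddSubgroup.closure {a • v + b • w, a • v - b • w} := by
  have hσ_neg := involutive_neg_addMonoidHom hσ
  have hL_neg := mapsTo_neg_addMonoidHom hL
  obtain ⟨a, ha, he⟩ : ∃ a > (0 : ℝ), fixedPart (-σ) L = zmultiples (a • v) :=
    exists_pos_fixedPart_eq_zmultiples (w := w) hσ_neg hL_neg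
      (fun x ↦ neg_eq_iff_eq_neg.trans (hv x)) (fun x hx ↦ (hw x).1 (neg_injective hx)) hfull
  obtain ⟨b, hb, hf⟩ := exists_pos_fixedPart_eq_zmultiples hσ hL hw (fun x ↦ (hv x).1) hfull
  obtain hrect | ⟨t, hadd, hsub, hrhomb⟩ :=
    eq_closure_pair_or_exists_eq_closure_pair_apply hσ_neg hL_neg he (by rwa [neg_neg])
  · exact ⟨a, ha, b, hb, .inl hrect⟩
  · have ht : t = (a / 2) • v + (b / 2) • w := by
      linear_combination (norm := module) (1 / 2 : ℝ) • hadd + (1 / 2 : ℝ) • hsub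
    have hσt : (-σ) t = (a / 2) • v - (b / 2) • w := by
      linear_combination (norm := module) (1 / 2 : ℝ) • hadd - (1 / 2 : ℝ) • hsub
    exact ⟨a / 2, half_pos ha, b / 2, half_pos hb, .inr (by rwa [← ht, ← hσt])⟩

end DiscreteSubgroup

theorem coe_closure_pair {V : Type*} [AddCommGroup V] (x y : V) :
    (AddSubgroup.closure {x, y} : Set V) = {z | ∃ m n : ℤ, z = m • x + n • y} := by
  ext z
  simp only [SetLike.mem_coe, mem_closure_pair, eq_comm, mem_ofPred_eq]

theorem discreteTopology_of_inter_norm_lt_eq {E : Type*} [SeminormedAddCommGroup E]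
    {L : AddSubgroup E} {ε : ℝ} (hε : 0 < ε) (h : (L : Set E) ∩ {x | ‖x‖ < ε} = {0}) :
    DiscreteTopology L :=
  DiscreteTopology.of_forall_le_norm hε fun x hx ↦ by
    by_contra! hlt
    exact hx (Subtype.ext (h.subset ⟨x.2, hlt⟩))

section Plane

@[simp] theorem vec2_apply_zero (a b : ℝ) : vec2 a b 0 = a := by simp [vec2]

@[simp] theorem vec2_apply_one (a b : ℝ) : vec2 a b 1 = b := by simp [vec2]

theorem plane_ext_iff {u v : EuclideanSpace ℝ (Fin 2)} : u = v ↔ u 0 = v 0 ∧ u 1 = v 1 := by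
  rw [PiLp.ext_iff, Fin.forall_fin_two]

theorem vec2_add_vec2 (a b c d : ℝ) : vec2 a b + vec2 c d = vec2 (a + c) (b + d) := by
  simp [plane_ext_iff]

theorem vec2_sub_vec2 (a b c d : ℝ) : vec2 a b - vec2 c d = vec2 (a - c) (b - d) := by
  simp [plane_ext_iff]

theorem smul_vec2 (r a b : ℝ) : r • vec2 a b = vec2 (r * a) (r * b) := by
  simp [plane_ext_iff]

theorem reflY_involutive : Function.Involutive reflY := fun v ↦ by
  simp [reflY, plane_ext_iff]

/-- The reflection `reflY` bundled as an additive homomorphism. -/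
def reflYHom : EuclideanSpace ℝ (Fin 2) →+ EuclideanSpace ℝ (Fin 2) :=
  AddMonoidHom.mk' reflY fun u v ↦ by simp [reflY, plane_ext_iff, add_comm]

theorem reflY_eq_self_iff (v : EuclideanSpace ℝ (Fin 2)) :
    reflY v = v ↔ v ∈ Submodule.span ℝ {vec2 0 1} := by
  simp [reflY, plane_ext_iff, Submodule.mem_span_singleton, neg_eq_self, eq_comm (a := (0 : ℝ))]

theorem reflY_eq_neg_iff (v : EuclideanSpace ℝ (Fin 2)) :
    reflY v = -v ↔ v ∈ Submodule.span ℝ {vec2 1 0} := by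
  simp [reflY, plane_ext_iff, Submodule.mem_span_singleton, self_eq_neg, eq_comm (a := (0 : ℝ))]

end Plane

/-- A two-dimensional lattice with an axis of symmetry is rectangular (aligned with
the axis) or rhombic. -/
theorem statement17 (L : AddSubgroup (EuclideanSpace ℝ (Fin 2)))
    (hdisc : ∃ ε > 0, (L : Set (EuclideanSpace ℝ (Fin 2))) ∩ {v | ‖v‖ < ε} = {0})
    (hfull : ∃ u v : EuclideanSpace ℝ (Fin 2),
      u ∈ L ∧ v ∈ L ∧ LinearIndependent ℝ ![u, v])
    (hrefl : reflY '' (L : Set (EuclideanSpace ℝ (Fin 2))) = L) :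
    ∃ a > (0 : ℝ), ∃ b > (0 : ℝ),
      (L : Set (EuclideanSpace ℝ (Fin 2)))
          = {w | ∃ m n : ℤ, w = m • vec2 a 0 + n • vec2 0 b} ∨
      (L : Set (EuclideanSpace ℝ (Fin 2)))
          = {w | ∃ m n : ℤ, w = m • vec2 a b + n • vec2 a (-b)} := by
  obtain ⟨ε, hε, hball⟩ := hdisc
  have := discreteTopology_of_inter_norm_lt_eq hε hball
  have hL : MapsTo reflYHom L L := mapsTo_iff_image_subset.2 hrefl.subset
  simpa only [← SetLike.coe_set_eq, coe_closure_pair, smul_vec2, vec2_add_vec2, vec2_sub_vec2,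
    mul_one, mul_zero, add_zero, zero_add, sub_zero, zero_sub] using
    statement17_general (σ := reflYHom) reflY_involutive hL reflY_eq_neg_iff reflY_eq_self_iff hfull
end
end
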